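/- For every integer n ≥ 1 the dual canonical basis elements satisfy the product expansions B[n,0,0,n−1]·B[1,0,0,1] = q^{3−4n} B[n+1,0,0,n] + q^{4−4n} B[n,1,1,n−1] and B[1,0,0,1]·B[n,0,0,n−1] = q^{1−4n} B[n+1,0,0,n] + q^{−4n} B[n,1,1,n−1]. -/

import Mathlib

noncomputable section

abbrev F : Type := RatFunc ℚ

/-- The deformation parameter `q`. -/
def qq : F := RatFunc.X

/-- The quantum integer `[3] = q² + 1 + q⁻²`. -/
def box3 : F := qq ^ 2 + 1 + (qq⁻¹) ^ 2

/-- The generators `E₁, E₂` of the free algebra. -/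
def gen (i : Fin 2) : FreeAlgebra F (Fin 2) := FreeAlgebra.ι F i

/-- The quantized Serre relations. -/
inductive SerreRel : FreeAlgebra F (Fin 2) → FreeAlgebra F (Fin 2) → Prop
  | rel1 : SerreRel
      (gen 0 ^ 3 * gen 1 - box3 • (gen 0 ^ 2 * gen 1 * gen 0)
        + box3 • (gen 0 * gen 1 * gen 0 ^ 2) - gen 1 * gen 0 ^ 3) 0
  | rel2 : SerreRel
      (gen 1 ^ 3 * gen 0 - box3 • (gen 1 ^ 2 * gen 0 * gen 1)
        + box3 • (gen 1 * gen 0 * gen 1 ^ 2) - gen 0 * gen 1 ^ 3) 0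

/-- `U = U_q(𝔫)`, the free algebra on `E₁, E₂` modulo the quantized Serre relations. -/
abbrev U : Type := RingQuot SerreRel

def E1 : U := RingQuot.mkAlgHom F SerreRel (gen 0)
def E2 : U := RingQuot.mkAlgHom F SerreRel (gen 1)

/-- `A = (1/(q+q⁻¹))(E₂E₁ − q⁻²E₁E₂)`. -/
def Aelt : U := (qq + qq⁻¹)⁻¹ • (E2 * E1 - (qq⁻¹) ^ 2 • (E1 * E2))

def v0 : U := E1
def v1 : U := Aelt * v0 - v0 * Aelt
def v2 : U := Aelt * v1 - v1 * Aelt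
def v3 : U := Aelt * v2 - v2 * Aelt

/-- `uᵢ = (1 − q⁻²)⁻²ⁱ vᵢ`. -/
def u0 : U := v0
def u1 : U := ((1 - (qq⁻¹) ^ 2)⁻¹) ^ 2 • v1
def u2 : U := ((1 - (qq⁻¹) ^ 2)⁻¹) ^ 4 • v2
def u3 : U := ((1 - (qq⁻¹) ^ 2)⁻¹) ^ 6 • v3

/-- `p₁ = u₃u₁ − q²u₂²`. -/
def p1 : U := u3 * u1 - qq ^ 2 • u2 ^ 2
/-- `p₀ = u₂u₀ − q²u₁²`. -/
def p0 : U := u2 * u0 - qq ^ 2 • u1 ^ 2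

/-- `S`, the subalgebra of `U` generated by `u₀, u₁, u₂, u₃`. -/
abbrev Sgen : Subalgebra F U := Algebra.adjoin F ({u0, u1, u2, u3} : Set U)

def us0 : Sgen := ⟨u0, Algebra.subset_adjoin (by simp)⟩
def us1 : Sgen := ⟨u1, Algebra.subset_adjoin (by simp)⟩
def us2 : Sgen := ⟨u2, Algebra.subset_adjoin (by simp)⟩
def us3 : Sgen := ⟨u3, Algebra.subset_adjoin (by simp)⟩

/-- `p₁ = u₃u₁ − q²u₂²` as an element of `S`. -/
def ps1 : Sgen := us3 * us1 - qq ^ 2 • us2 ^ 2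
/-- `p₀ = u₂u₀ − q²u₁²` as an element of `S`. -/
def ps0 : Sgen := us2 * us0 - qq ^ 2 • us1 ^ 2

/-- Index quadruples `a = (a₃, a₂, a₁, a₀)`. -/
abbrev Idx : Type := ℕ × ℕ × ℕ × ℕ

/-- The PBW monomial `u₃^{a₃}u₂^{a₂}u₁^{a₁}u₀^{a₀}`. -/
def mon (a : Idx) : Sgen := us3 ^ a.1 * us2 ^ a.2.1 * us1 ^ a.2.2.1 * us0 ^ a.2.2.2

/-- `b(a) = C(a₃,2)+C(a₂,2)+C(a₁,2)+C(a₀,2)`. -/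
def bexp (a : Idx) : ℕ :=
  Nat.choose a.1 2 + Nat.choose a.2.1 2 + Nat.choose a.2.2.1 2 + Nat.choose a.2.2.2 2

/-- The dual PBW basis element `E[a] = q^{b(a)} u₃^{a₃}u₂^{a₂}u₁^{a₁}u₀^{a₀}`. -/
def Ee (a : Idx) : Sgen := qq ^ bexp a • mon a

/-- `N(a) = (a₃+a₂+a₁+a₀)² − 7a₃ − 5a₂ − 3a₁ − a₀`. -/
def Nnum (a : Idx) : ℤ :=
  ((a.1 : ℤ) + a.2.1 + a.2.2.1 + a.2.2.2) ^ 2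
    - 7 * a.1 - 5 * a.2.1 - 3 * a.2.2.1 - a.2.2.2

/-- `a ⊴ b` iff `b − a ∈ ℕ·(−1,2,−1,0) + ℕ·(0,−1,2,−1)`. -/
def tri (a b : Idx) : Prop :=
  ∃ s r : ℕ,
    (b.1 : ℤ) = a.1 - s ∧
    (b.2.1 : ℤ) = a.2.1 + 2 * s - r ∧
    (b.2.2.1 : ℤ) = a.2.2.1 - s + 2 * r ∧
    (b.2.2.2 : ℤ) = a.2.2.2 - r

/-- `S(a) = {b ∈ ℕ⁴ : a ⊴ b and a ≠ b}`. -/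
def Sset (a : Idx) : Set Idx := {b | tri a b ∧ a ≠ b}

/-- Condition (i): `B[a] − E[a] ∈ Σ_{b ∈ S(a)} qℤ[q]·E[b]`. -/
def cond1 (B : Idx → Sgen) (a : Idx) : Prop :=
  ∃ φ : Idx →₀ Polynomial ℤ,
    (↑φ.support : Set Idx) ⊆ Sset a ∧
    B a - Ee a =
      φ.sum fun b p => (qq * Polynomial.eval₂ (Int.castRingHom F) qq p) • Ee b

/-- Hypotheses on the bar involution of coefficients `bar : q ↦ q⁻¹` and on the
anti-automorphism `σ` of `S`: `σ` is an additive, anti-multiplicative bijection with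
`σ(c(q)·x) = c(q⁻¹)·σ(x)` and `σ(uᵢ) = q^{2i}uᵢ`. -/
def SigmaHyp (bar : F →+* F) (σ : Sgen → Sgen) : Prop :=
  bar qq = qq⁻¹ ∧
  Function.Bijective σ ∧
  (∀ x y : Sgen, σ (x + y) = σ x + σ y) ∧
  (∀ x y : Sgen, σ (x * y) = σ y * σ x) ∧
  (∀ (c : F) (x : Sgen), σ (c • x) = bar c • σ x) ∧
  σ us0 = us0 ∧ σ us1 = qq ^ 2 • us1 ∧ σ us2 = qq ^ 4 • us2 ∧ σ us3 = qq ^ 6 • us3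

/-- The defining properties of the dual canonical basis `B`: for every `a ∈ ℕ⁴`,
`B[a] − E[a] ∈ Σ_{b ∈ S(a)} qℤ[q]·E[b]` and `σ(B[a]) = q^{−N(a)}B[a]`. -/
def DCB (bar : F →+* F) (σ : Sgen → Sgen) (B : Idx → Sgen) : Prop :=
  ∀ a : Idx, cond1 B a ∧ σ (B a) = qq ^ (-Nnum a) • B a

/-- Extension of `B` to integer quadruples by the convention that `B[a] = 0` whenever
some coordinate of `a` is negative. -/
def Bz (B : Idx → Sgen) (a : ℤ × ℤ × ℤ × ℤ) : Sgen :=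
  if 0 ≤ a.1 ∧ 0 ≤ a.2.1 ∧ 0 ≤ a.2.2.1 ∧ 0 ≤ a.2.2.2 then
    B (a.1.toNat, a.2.1.toNat, a.2.2.1.toNat, a.2.2.2.toNat)
  else 0


section part1
variable {K R : Type*} [Field K] [Ring R] [Algebra K R]

theorem br_HA (t : K) (a b : R)
    (h1 : t • (a*(a*(a*b))) - (1+t+t^2) • (a*(a*(b*a))) + (1+t+t^2) • (a*(b*(a*a))) - t • (b*(a*(a*a))) = 0)
    (h2 : t • (b*(b*(b*a))) - (1+t+t^2) • (b*(b*(a*b))) + (1+t+t^2) • (b*(a*(b*b))) - t • (a*(b*(b*b))) = 0)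
    (A H : R) (hA : A = b*a - t • (a*b))
    (hH : H = -(2*t^3) • (a*(a*(b*b))) + (t^2*(1+t)^2) • (a*(b*(a*b))) + (t-t^3) • (a*(b*(b*a)))
      + (t-t^3) • (b*(a*(a*b))) - (1+t)^2 • (b*(a*(b*a))) + (2*t) • (b*(b*(a*a)))) :
    H * a - a * H = (1+t^2) • (A * (A*a-a*A) - (A*a-a*A)*A) ∧ (1+t+t^2) • (H*A-A*H) = 0 := by
  have e1 := congrArg (fun x => x*b) h1
  have e2 := congrArg (fun x => b*x) h1
  have e3 := congrArg (fun x => x*(b*b)) h1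
  have e4 := congrArg (fun x => b*(x*b)) h1
  have e5 := congrArg (fun x => b*(b*x)) h1
  have f3 := congrArg (fun x => x*(a*a)) h2
  have f4 := congrArg (fun x => a*(x*a)) h2
  have f5 := congrArg (fun x => a*(a*x)) h2
  simp only [mul_add, add_mul, mul_sub, sub_mul, mul_assoc, smul_mul_assoc, mul_smul_comm, zero_mul, mul_zero] at e1 e2 e3 e4 e5 f3 f4 f5
  subst hA hH
  constructor
  · simp only [mul_add, add_mul, mul_sub, sub_mul, mul_assoc, smul_mul_assoc, mul_smul_comm, neg_smul, neg_mul, mul_neg, smul_sub, smul_add]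
    linear_combination (norm := module) (2*t^2) • e1 - (2:K) • e2
  · simp only [mul_add, add_mul, mul_sub, sub_mul, mul_assoc, smul_mul_assoc, mul_smul_comm, neg_smul, neg_mul, mul_neg, smul_sub, smul_add]
    linear_combination (norm := module) (-2*t^4) • e3 + (2*t^2+2*t^3) • e4 - (2*t)• e5 - (2*t) • f3 + (2*t^2+2*t^3) • f4 - (2*t^4) • f5

/-- the six relations from A, H -/
theorem rels_of (t : K) (h2 : (2:K) ≠ 0) (ht : 1 + t^2 ≠ 0) (A H w0 w1 w2 w3 : R)
    (d0 : A*w0 - w0*A = w1) (d1 : A*w1 - w1*A = w2) (d2 : A*w2 - w2*A = w3)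
    (hAH : H*A = A*H) (hH : H*w0 - w0*H = (1+t^2) • w2) (h01 : w0*w1 = t • (w1*w0)) :
    w0*w2 = t • (w2*w0) + (t-1) • (w1*w1) ∧ w1*w2 = t • (w2*w1) ∧
    w0*w3 = t • (w3*w0) + (t^2-1) • (w2*w1) ∧ w1*w3 = t • (w3*w1) + (t-1) • (w2*w2) ∧
    w2*w3 = t • (w3*w2) := by
  set D : R → R := fun x => A*x - x*A with hD
  set G : R → R := fun x => (1+t^2)⁻¹ • (H*x - x*H) with hG
  have Dm : ∀ x y, D (x*y) = D x * y + x * D y := by intro x y; simp only [hD]; noncomm_ring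
  have Gm : ∀ x y, G (x*y) = G x * y + x * G y := by
    intro x y; simp only [hG, smul_mul_assoc, mul_smul_comm, ← smul_add]; congr 1; noncomm_ring
  have Ds : ∀ (c:K) x, D (c•x) = c • D x := by
    intro c x; simp only [hD, smul_mul_assoc, mul_smul_comm, smul_sub]
  have Gs : ∀ (c:K) x, G (c•x) = c • G x := by
    intro c x; simp only [hG, smul_mul_assoc, mul_smul_comm, ← smul_sub]; rw [smul_comm]
  have Da : ∀ x y, D (x+y) = D x + D y := by intro x y; simp only [hD]; noncomm_ring
  have GD : ∀ x, G (D x) = D (G x) := by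
    intro x
    rw [hG]; simp only [Ds]; congr 1
    simp only [hD, mul_sub, sub_mul, ← mul_assoc, hAH]
    simp only [mul_assoc, hAH]
    abel
  have d0' : D w0 = w1 := d0
  have d1' : D w1 = w2 := d1
  have d2' : D w2 = w3 := d2
  have g0 : G w0 = w2 := by simp only [hG, hH, smul_smul, inv_mul_cancel₀ ht, one_smul]
  have key : ∀ x y z w : R, D x = y → D y = z → D z = w → G x = z → x*y = t•(y*x) →
      x*z = t•(z*x) + (t-1)•(y*y) ∧ y*z = t•(z*y) ∧ x*w = t•(w*x) + (t^2-1)•(z*y) := by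
    intro x y z w hx hy hz hgx hxy
    have hgy : G y = w := by rw [← hx, GD, hgx, hz]
    have a1 := congrArg D hxy
    simp only [Dm, Ds, hx, hy] at a1
    have a2 := congrArg D a1
    simp only [Dm, Ds, Da, hx, hy, hz] at a2
    have b1 := congrArg G hxy
    simp only [Gm, Gs, hgx, hgy] at b1
    have c1 : y*z = t•(z*y) := by
      have : (2:K) • (y*z - t•(z*y)) = 0 := by
        linear_combination (norm := module) a2 - b1
      exact sub_eq_zero.1 ((smul_eq_zero.1 this).resolve_left h2)
    refine ⟨by linear_combination (norm := module) a1, c1, ?_⟩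
    rw [c1] at b1
    linear_combination (norm := module) b1
  obtain ⟨r02, r12, r03⟩ := key w0 w1 w2 w3 d0' d1' d2' g0 h01
  have g1 : G w1 = w3 := by rw [← d0', GD, g0, d2']
  obtain ⟨r13, r23, -⟩ := key w1 w2 w3 (D w3) d1' d2' rfl g1 r12
  exact ⟨r02, r12, r03, r13, r23⟩
end part1

section part3
set_option linter.unusedSimpArgs false
set_option linter.unusedVariables false
variable {K R : Type*} [Field K] [Ring R] [Algebra K R]

theorem base_ids (q : K) (hq : q ≠ 0) (u0 u1 u2 u3 p1 p0 z : R)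
    (r01 : u0*u1 = (q⁻¹)^2 • (u1*u0))
    (r02 : u0*u2 = (q⁻¹)^2 • (u2*u0) + ((q⁻¹)^2-1) • (u1*u1))
    (r12 : u1*u2 = (q⁻¹)^2 • (u2*u1))
    (r03 : u0*u3 = (q⁻¹)^2 • (u3*u0) + (((q⁻¹)^2)^2-1) • (u2*u1))
    (r13 : u1*u3 = (q⁻¹)^2 • (u3*u1) + ((q⁻¹)^2-1) • (u2*u2))
    (r23 : u2*u3 = (q⁻¹)^2 • (u3*u2))
    (hp1 : p1 = u3*u1 - q^2 • (u2*u2)) (hp0 : p0 = u2*u0 - q^2 • (u1*u1))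
    (hz : z = u3*u0 - q^2 • (u2*u1)) :
    (p1*u1 = q^2 • (u1*p1) ∧ p1*u2 = u2*p1 ∧ u3*p1 = q^2 • (p1*u3) ∧ p1*u0 = q^4 • (u0*p1)) ∧
    (p0*u0 = q^2 • (u0*p0) ∧ p0*u1 = u1*p0 ∧ u2*p0 = q^2 • (p0*u2) ∧ u3*p0 = q^4 • (p0*u3)) ∧
    (u3*z = q^2 • (z*u3) + (q^2-1) • (p1*u2) ∧ q^2 • (z*u2) = u2*z + ((q^2-1)*q^2) • (p0*u3) ∧
      q^2 • (z*u2) = p1*u1 + q^4 • (p0*u3)) ∧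
    (q^8 • (u1*u3) - q^6 • (u2*u2) = q^6 • p1 ∧ q^4 • (u0*u2) - q^2 • (u1*u1) = q^2 • p0 ∧
      q^6 • (u0*u3) - q^4 • (u1*u2) = q^4 • z) := by
  have a01 : ∀ x, u0*(u1*x) = (q⁻¹)^2 • (u1*(u0*x)) := by
    intro x; rw [← mul_assoc, r01, smul_mul_assoc, mul_assoc]
  have a12 : ∀ x, u1*(u2*x) = (q⁻¹)^2 • (u2*(u1*x)) := by
    intro x; rw [← mul_assoc, r12, smul_mul_assoc, mul_assoc]
  have a23 : ∀ x, u2*(u3*x) = (q⁻¹)^2 • (u3*(u2*x)) := by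
    intro x; rw [← mul_assoc, r23, smul_mul_assoc, mul_assoc]
  have a02 : ∀ x, u0*(u2*x) = (q⁻¹)^2 • (u2*(u0*x)) + ((q⁻¹)^2-1) • (u1*(u1*x)) := by
    intro x; rw [← mul_assoc, r02, add_mul]; simp only [smul_mul_assoc, mul_assoc]
  have a13 : ∀ x, u1*(u3*x) = (q⁻¹)^2 • (u3*(u1*x)) + ((q⁻¹)^2-1) • (u2*(u2*x)) := by
    intro x; rw [← mul_assoc, r13, add_mul]; simp only [smul_mul_assoc, mul_assoc]
  have a03 : ∀ x, u0*(u3*x) = (q⁻¹)^2 • (u3*(u0*x)) + (((q⁻¹)^2)^2-1) • (u2*(u1*x)) := by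
    intro x; rw [← mul_assoc, r03, add_mul]; simp only [smul_mul_assoc, mul_assoc]
  subst hp1 hp0 hz
  refine ⟨⟨?_, ?_, ?_, ?_⟩, ⟨?_, ?_, ?_, ?_⟩, ⟨?_, ?_, ?_⟩, ⟨?_, ?_, ?_⟩⟩ <;>
  · simp only [mul_assoc, mul_sub, sub_mul, mul_add, add_mul, smul_mul_assoc, mul_smul_comm, smul_sub, smul_add,
      r01, r02, r03, r12, r13, r23, a01, a02, a03, a12, a13, a23]
    try (match_scalars <;> field_simp <;> try ring)

theorem comm_ids (q : K) (hq : q ≠ 0) (u0 u1 u2 u3 p1 p0 z : R)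
    (hp1 : p1 = u3*u1 - q^2 • (u2*u2)) (hp0 : p0 = u2*u0 - q^2 • (u1*u1))
    (hz : z = u3*u0 - q^2 • (u2*u1))
    (a : p1*u1 = q^2 • (u1*p1) ∧ p1*u2 = u2*p1 ∧ u3*p1 = q^2 • (p1*u3) ∧ p1*u0 = q^4 • (u0*p1))
    (b : p0*u0 = q^2 • (u0*p0) ∧ p0*u1 = u1*p0 ∧ u2*p0 = q^2 • (p0*u2) ∧ u3*p0 = q^4 • (p0*u3)) :
    p1*z = q^2 • (z*p1) ∧ z*p0 = q^2 • (p0*z) ∧ p1*p0 = q^4 • (p0*p1) := by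
  obtain ⟨a1, a2, a3, a0⟩ := a
  obtain ⟨b0, b1, b2, b3⟩ := b
  have hq2 : q^2 ≠ 0 := pow_ne_zero _ hq
  refine ⟨?_, ?_, ?_⟩
  · have e1 : q^2 • (p1*(u3*u0)) = q^2 • (q^2 • (u3*u0*p1)) := by
      rw [← mul_assoc, ← smul_mul_assoc, ← a3, mul_assoc, a0, mul_smul_comm, smul_smul, mul_assoc]
      congr 1; ring
    have e1' := smul_right_injective R hq2 e1
    have e2 : p1*(u2*u1) = q^2 • (u2*u1*p1) := by
      rw [← mul_assoc, a2, mul_assoc, a1, mul_smul_comm, mul_assoc]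
    rw [hz, mul_sub, e1', mul_smul_comm, e2, sub_mul, smul_mul_assoc, smul_sub]
  · have e1 : q^2 • (u3*u0*p0) = q^2 • (q^2 • (p0*(u3*u0))) := by
      rw [mul_assoc, ← mul_smul_comm, ← b0, ← mul_assoc, b3, smul_mul_assoc, smul_smul, mul_assoc]
      congr 1; ring
    have e1' := smul_right_injective R hq2 e1
    have e2 : u2*u1*p0 = q^2 • (p0*(u2*u1)) := by
      rw [mul_assoc, ← b1, ← mul_assoc, b2, smul_mul_assoc, mul_assoc]
    rw [hz, sub_mul, e1', smul_mul_assoc, e2, mul_sub, mul_smul_comm, smul_sub]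
  · have e1 : p1*(u2*u0) = q^4 • (u2*u0*p1) := by
      rw [← mul_assoc, a2, mul_assoc, a0, mul_smul_comm, mul_assoc]
    have e2 : p1*(u1*u1) = q^4 • (u1*u1*p1) := by
      rw [← mul_assoc, a1, smul_mul_assoc, mul_assoc, a1, mul_smul_comm, smul_smul, mul_assoc]
      congr 1; ring
    rw [hp0, mul_sub, mul_smul_comm, e1, e2, sub_mul, smul_mul_assoc, smul_sub, smul_comm]

/-- second order recursion for `B[m+1,0,0,m]` -/
def Xq (q : K) (x0 x1 z P : R) : ℕ → R
  | 0 => x0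
  | 1 => x1
  | m+2 => q^(4*m+5) • (Xq q x0 x1 z P (m+1) * z) - q^(8*m+10) • (P * Xq q x0 x1 z P m)

/-- second order recursion for `B[m,0,0,m]` -/
def Sq (q : K) (z P : R) : ℕ → R
  | 0 => 1
  | 1 => z
  | m+2 => q^(4*m+4) • (Sq q z P (m+1) * z) - q^(8*m+2) • (P * Sq q z P m)

theorem Sq_comm (q : K) (z P : R) (hP : P*z = z*P) (m : ℕ) : Sq q z P m * z = z * Sq q z P m := by
  induction m using Nat.twoStepInduction with
  | zero => simp [Sq]
  | one => simp [Sq]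
  | more m h1 h2 =>
    rw [Sq]
    simp only [sub_mul, mul_sub, smul_mul_assoc, mul_smul_comm]
    rw [mul_assoc P, h1, ← mul_assoc P, hP, h2]
    simp only [← mul_assoc]
    rw [mul_assoc z _ z, h2, ← mul_assoc]

theorem Xq_P (q : K) (x0 x1 z P : R) (hP : P*z = z*P) (h0 : x0*P = q^6 • (P*x0))
    (h1 : x1*P = q^6 • (P*x1)) (m : ℕ) :
    Xq q x0 x1 z P m * P = q^6 • (P * Xq q x0 x1 z P m) := by
  induction m using Nat.twoStepInduction with
  | zero => simpa [Xq]
  | one => simpa [Xq]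
  | more m e1 e2 =>
    rw [Xq]
    simp only [sub_mul, mul_sub, smul_mul_assoc, mul_smul_comm]
    rw [mul_assoc P, e1, mul_assoc _ z, ← hP, ← mul_assoc, e2]
    simp only [mul_smul_comm, smul_mul_assoc, mul_assoc]
    module

/-- expansions of X through S -/
theorem X_of_S (q : K) (u3 w z P : R) (h0 : u3*P = q^6 • (P*u3)) (h1 : w*P = q^6 • (P*w)) (m : ℕ) :
    Xq q u3 (q • (u3*z) - q^3 • w) z P (m+1)
      = q^(m+1) • (u3 * Sq q z P (m+1)) - q^(5*m+3) • (w * Sq q z P m) := by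
  have h0' : ∀ x, u3*(P*x) = q^6 • (P*(u3*x)) := by
    intro x; rw [← mul_assoc, h0, smul_mul_assoc, mul_assoc]
  have h1' : ∀ x, w*(P*x) = q^6 • (P*(w*x)) := by
    intro x; rw [← mul_assoc, h1, smul_mul_assoc, mul_assoc]
  induction m using Nat.twoStepInduction with
  | zero => simp [Xq, Sq]
  | one =>
    simp only [Xq, Sq, mul_sub, sub_mul, smul_mul_assoc, mul_smul_comm, mul_assoc, h0', h0, mul_one]
    module
  | more m e1 e2 =>
    have hS3 : Sq q z P (m+2+1) = q^(4*m+8) • (Sq q z P (m+2) * z) - q^(8*m+10) • (P * Sq q z P (m+1)) := by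
      rw [Sq]; congr 2
    have hS2 : Sq q z P (m+2) = q^(4*m+4) • (Sq q z P (m+1) * z) - q^(8*m+2) • (P * Sq q z P m) := by
      rw [Sq]
    rw [Xq, e2, e1, hS3, show m+1+1 = m+2 from rfl, hS2]
    simp only [mul_sub, sub_mul, smul_mul_assoc, mul_smul_comm, mul_assoc, h0', h1']
    simp only [smul_sub, smul_smul]
    module

/-- commutator with z -/
theorem X_comm (q : K) (hq : q ≠ 0) (u3 u2 w z P p1 p0 : R) (hP : P*z = z*P)
    (hPdef : P = p1*p0) (hw : w = p1*u2) (hp1z : p1*z = q^2 • (z*p1))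
    (I1 : u3*z = q^2 • (z*u3) + (q^2-1) • w)
    (I2 : q^2 • (z*u2) = u2*z + ((q^2-1)*q^2) • (p0*u3))
    (X : ℕ → R) (hX : X = Xq q u3 (q • (u3*z) - q^3 • w) z P) (m : ℕ) :
    X (m+1) * z = q^2 • (z * X (m+1)) + ((q^2-1)*q^(4*m+3)) • (P * X m) := by
  have hP' : ∀ x, P*(z*x) = z*(P*x) := by intro x; rw [← mul_assoc, hP, mul_assoc]
  have I1' : ∀ x, u3*(z*x) = q^2 • (z*(u3*x)) + (q^2-1) • (w*x) := by
    intro x; rw [← mul_assoc, I1, add_mul]; simp only [smul_mul_assoc, mul_assoc]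
  have hwz : w*z = q^4 • (z*w) - ((q^2-1)*q^2) • (P*u3) := by
    have e1 := congrArg (fun x => p1*x) I2
    simp only [mul_add, mul_smul_comm] at e1
    rw [← mul_assoc, hp1z] at e1
    simp only [← mul_assoc, smul_mul_assoc] at e1
    rw [hw, hPdef]
    simp only [← mul_assoc]
    linear_combination (norm := module) -e1
  induction m using Nat.twoStepInduction with
  | zero =>
    subst hX
    simp only [Xq, mul_sub, sub_mul, smul_mul_assoc, mul_smul_comm, mul_assoc, I1, I1', mul_add, add_mul, hwz]
    module
  | one =>
    subst hX
    simp only [Xq, mul_sub, sub_mul, smul_mul_assoc, mul_smul_comm, mul_assoc, I1, I1', mul_add, add_mul, hwz, hP, hP']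
    module
  | more m e1 e2 =>
    have h3 : X (m+3) = q^(4*m+9) • (X (m+2) * z) - q^(8*m+18) • (P * X (m+1)) := by
      subst hX; rw [Xq]; congr 2
    have h2 : X (m+2) = q^(4*m+5) • (X (m+1) * z) - q^(8*m+10) • (P * X m) := by
      subst hX; rw [Xq]
    have e2' := congrArg (fun x => x*z) e2
    have e1' := congrArg (fun x => P*x) e1
    have h2' := congrArg (fun x => P*x) h2
    rw [h3]
    simp only [add_mul, mul_add, mul_sub, sub_mul, smul_mul_assoc, mul_smul_comm, mul_assoc, hP'] at e1' e2' h2' ⊢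
    linear_combination (norm := module) q^(4*m+9) • e2' - q^(8*m+18) • e1' - ((q^2-1)*q^(4*m+11)) • h2'

/-- left form of the recursion -/
theorem X_left (q : K) (hq : q ≠ 0) (u3 u2 w z P p1 p0 : R) (hP : P*z = z*P)
    (hPdef : P = p1*p0) (hw : w = p1*u2) (hp1z : p1*z = q^2 • (z*p1))
    (I1 : u3*z = q^2 • (z*u3) + (q^2-1) • w)
    (I2 : q^2 • (z*u2) = u2*z + ((q^2-1)*q^2) • (p0*u3))
    (X : ℕ → R) (hX : X = Xq q u3 (q • (u3*z) - q^3 • w) z P) :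
    X 1 = q^3 • (z * u3) - q • w ∧ 
    ∀ m, X (m+2) = q^(4*m+7) • (z * X (m+1)) - q^(8*m+8) • (P * X m) := by
  refine ⟨?_, fun m => ?_⟩
  · subst hX; rw [Xq, I1]; module
  · have h := X_comm q hq u3 u2 w z P p1 p0 hP hPdef hw hp1z I1 I2 X hX m
    have h2 : X (m+2) = q^(4*m+5) • (X (m+1) * z) - q^(8*m+10) • (P * X m) := by
      subst hX; rw [Xq]
    rw [h2, h]
    module

theorem S_of_X (q : K) (hq : q ≠ 0) (u3 u2 u1 u0 w z P p1 p0 : R) (hP : P*z = z*P)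
    (hPdef : P = p1*p0) (hw : w = p1*u2) (hp0 : p0 = u2*u0 - q^2 • (u1*u1))
    (hz : z = u3*u0 - q^2 • (u2*u1)) (hzp0 : z*p0 = q^2 • (p0*z))
    (hpp : p1*p0 = q^4 • (p0*p1))
    (I3 : q^2 • (z*u2) = p1*u1 + q^4 • (p0*u3))
    (X : ℕ → R)
    (L1 : X 1 = q^3 • (z * u3) - q • w) (L0 : X 0 = u3)
    (L : ∀ m, X (m+2) = q^(4*m+7) • (z * X (m+1)) - q^(8*m+8) • (P * X m)) (m : ℕ) :
    Sq q z P (m+2) = q^(m+1) • (X (m+1) * u0) - q^(7*m+8) • (p0 * X m * u1) := by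
  have hzp0' : ∀ x, z*(p0*x) = q^2 • (p0*(z*x)) := by
    intro x; rw [← mul_assoc, hzp0, smul_mul_assoc, mul_assoc]
  have hpp' : ∀ x, p1*(p0*x) = q^4 • (p0*(p1*x)) := by
    intro x; rw [← mul_assoc, hpp, smul_mul_assoc, mul_assoc]
  have hPp0 : ∀ x, P*(p0*x) = q^4 • (p0*(P*x)) := by
    intro x; rw [hPdef, mul_assoc, hpp', mul_assoc]
  have Sl : ∀ m, Sq q z P (m+2) = q^(4*m+4) • (z * Sq q z P (m+1)) - q^(8*m+2) • (P * Sq q z P m) := by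
    intro m; rw [Sq, Sq_comm q z P hP]
  have B0 : Sq q z P 2 = q • (X 1 * u0) - q^8 • (p0 * u3 * u1) := by
    have i3 := congrArg (fun x => x*u1) I3
    have ez : z*z = z*(u3*u0) - q^2 • (z*(u2*u1)) := by
      conv_lhs => rw [hz]
      rw [← hz, ← mul_smul_comm, ← mul_sub, ← hz]
    have eP : P = p1*(u2*u0) - q^2 • (p1*(u1*u1)) := by
      rw [hPdef, ← mul_smul_comm, ← mul_sub, ← hp0]
    rw [Sl, Sq, Sq, L1, mul_one, ez, hw]
    nth_rewrite 1 [eP]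
    simp only [add_mul, mul_add, mul_sub, sub_mul, smul_mul_assoc, mul_smul_comm, mul_assoc] at i3 ⊢
    linear_combination (norm := module) -q^4 • i3
  induction m using Nat.twoStepInduction with
  | zero => rw [B0, L0]; simp
  | one =>
    rw [Sl, B0, L, L0, L1]
    have ePz : P * z = P*(u3*u0) - q^2 • (P*(u2*u1)) := by
      rw [← mul_smul_comm, ← mul_sub, ← hz]
    have e2 : P*(u2*u1) = q^4 • (p0*(p1*(u2*u1))) := by
      rw [hPdef, mul_assoc, hpp']
    have : Sq q z P 1 = z := by rw [Sq]
    rw [this, ePz, e2, hw]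
    simp only [add_mul, mul_add, mul_sub, sub_mul, smul_mul_assoc, mul_smul_comm, mul_assoc, hzp0']
    module
  | more m e1 e2 =>
    rw [Sl, e2, e1, L (m+1), L m]
    simp only [add_mul, mul_add, mul_sub, sub_mul, smul_mul_assoc, mul_smul_comm, mul_assoc, hzp0', hPp0]
    module
end part3
noncomputable section

theorem qq_ne : qq ≠ 0 := RatFunc.X_ne_zero

theorem qq_eval_inj {p r : Polynomial ℤ}
    (h : Polynomial.eval₂ (Int.castRingHom F) qq p = Polynomial.eval₂ (Int.castRingHom F) qq r) : p = r := by
  have key : ∀ p : Polynomial ℤ, Polynomial.eval₂ (Int.castRingHom F) qq p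
      = algebraMap (Polynomial ℚ) F (p.map (Int.castRingHom ℚ)) := by
    intro p
    induction p using Polynomial.induction_on' with
    | add p q hp hq => simp [Polynomial.eval₂_add, hp, hq]
    | monomial n a =>
      rw [Polynomial.eval₂_monomial, Polynomial.map_monomial, ← Polynomial.C_mul_X_pow_eq_monomial]
      simp [qq]
  rw [key, key] at h
  exact Polynomial.map_injective _ Int.cast_injective (RatFunc.algebraMap_injective ℚ h)

theorem qq_poly_ne (p : Polynomial ℤ) (hp : p ≠ 0) :
    Polynomial.eval₂ (Int.castRingHom F) qq p ≠ 0 := by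
  intro h
  exact hp (qq_eval_inj (by rw [h, Polynomial.eval₂_zero]))

theorem bar_fix (p : Polynomial ℤ)
    (h : qq * Polynomial.eval₂ (Int.castRingHom F) qq p
      = qq⁻¹ * Polynomial.eval₂ (Int.castRingHom F) qq⁻¹ p) : p = 0 := by
  by_contra hp
  have hq := qq_ne
  let _ : Invertible (qq⁻¹) := invertibleOfNonzero (inv_ne_zero hq)
  have h1 := Polynomial.eval₂_reverse_mul_pow (Int.castRingHom F) (qq⁻¹) p
  rw [invOf_eq_inv, inv_inv] at h1
  rw [← h1] at h
  have h2 : Polynomial.eval₂ (Int.castRingHom F) qq (Polynomial.X^(p.natDegree+2) * p)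
      = Polynomial.eval₂ (Int.castRingHom F) qq p.reverse := by
    rw [Polynomial.eval₂_mul, Polynomial.eval₂_pow, Polynomial.eval₂_X]
    have e : (qq⁻¹)^p.natDegree * qq^p.natDegree = 1 := by
      rw [← mul_pow, inv_mul_cancel₀ hq, one_pow]
    have e2 : qq * qq⁻¹ = 1 := mul_inv_cancel₀ hq
    linear_combination (qq^(p.natDegree+1)) * h + (Polynomial.eval₂ (Int.castRingHom F) qq p.reverse) * (e
      + (qq⁻¹)^p.natDegree * qq^p.natDegree * e2)
  have h3 := congrArg Polynomial.natDegree (qq_eval_inj h2)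
  rw [Polynomial.natDegree_X_pow_mul _ hp] at h3
  have := p.reverse_natDegree_le
  omega

theorem t_ne1 : (1 : F) + ((qq⁻¹)^2)^2 ≠ 0 := by
  intro h
  have := qq_poly_ne (Polynomial.X^4 + 1) (Polynomial.Monic.ne_zero (by monicity!))
  apply this
  have hq := qq_ne
  field_simp at h
  simp [Polynomial.eval₂_add, Polynomial.eval₂_pow]
  linear_combination h

theorem t_ne2 : (1 : F) + (qq⁻¹)^2 + ((qq⁻¹)^2)^2 ≠ 0 := by
  intro h
  have := qq_poly_ne (Polynomial.X^4 + Polynomial.X^2 + 1) (Polynomial.Monic.ne_zero (by monicity!))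
  apply this
  have hq := qq_ne
  field_simp at h
  simp [Polynomial.eval₂_add, Polynomial.eval₂_pow]
  linear_combination h


theorem gen_rels {K R : Type*} [Field K] [Ring R] [Algebra K R] (q t b3 c k : K) (hq : q ≠ 0) (h2 : (2:K) ≠ 0)
    (ht : t = (q⁻¹)^2) (hb3 : b3 = q^2 + 1 + (q⁻¹)^2) (hne1 : 1 + t^2 ≠ 0) (hne : 1 + t + t^2 ≠ 0)
    (E1 E2 A0 v0 v1 v2 v3 u0 u1 u2 u3 : R)
    (s1 : E1^3*E2 - b3 • (E1^2*E2*E1) + b3 • (E1*E2*E1^2) - E2*E1^3 = 0)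
    (s2 : E2^3*E1 - b3 • (E2^2*E1*E2) + b3 • (E2*E1*E2^2) - E1*E2^3 = 0)
    (hA : A0 = c • (E2 * E1 - t • (E1 * E2)))
    (hv0 : v0 = E1) (hv1 : v1 = A0*v0 - v0*A0) (hv2 : v2 = A0*v1 - v1*A0) (hv3 : v3 = A0*v2 - v2*A0)
    (hu0 : u0 = v0) (hu1 : u1 = k^2 • v1) (hu2 : u2 = k^4 • v2) (hu3 : u3 = k^6 • v3) :
    u0*u1 = t • (u1*u0) ∧ u0*u2 = t • (u2*u0) + (t-1) • (u1*u1) ∧ u1*u2 = t • (u2*u1) ∧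
    u0*u3 = t • (u3*u0) + (t^2-1) • (u2*u1) ∧ u1*u3 = t • (u3*u1) + (t-1) • (u2*u2) ∧
    u2*u3 = t • (u3*u2) := by
  have hb : t * b3 = 1+t+t^2 := by
    rw [hb3, ht]; field_simp
  have serre1 : t • (E1*(E1*(E1*E2))) - (1+t+t^2) • (E1*(E1*(E2*E1)))
    + (1+t+t^2) • (E1*(E2*(E1*E1))) - t • (E2*(E1*(E1*E1))) = 0 := by
    rw [← hb]
    simp only [pow_succ, pow_zero, one_mul, mul_assoc] at s1 ⊢
    linear_combination (norm := module) t • s1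
  have serre2 : t • (E2*(E2*(E2*E1))) - (1+t+t^2) • (E2*(E2*(E1*E2)))
    + (1+t+t^2) • (E2*(E1*(E2*E2))) - t • (E1*(E2*(E2*E2))) = 0 := by
    rw [← hb]
    simp only [pow_succ, pow_zero, one_mul, mul_assoc] at s2 ⊢
    linear_combination (norm := module) t • s2
  obtain ⟨H, A, h1, hh2, hAd⟩ : ∃ H A : R, H * E1 - E1 * H = (1+t^2) • (A * (A*E1-E1*A) - (A*E1-E1*A)*A) ∧
      (1+t+t^2) • (H*A-A*H) = 0 ∧ A = E2 * E1 - t • (E1 * E2) := by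
    obtain ⟨h1, h2⟩ := br_HA t E1 E2 serre1 serre2 _ _ rfl rfl
    exact ⟨_, _, h1, h2, rfl⟩
  have h2' := sub_eq_zero.1 ((smul_eq_zero.1 hh2).resolve_left hne)
  have h01 : v0*v1 = t • (v1*v0) := by
    rw [hv1, hv0, hA]
    simp only [mul_sub, sub_mul, mul_smul_comm, smul_mul_assoc, smul_sub, mul_assoc]
    linear_combination (norm := module) c • serre1
  rw [← hAd] at hA
  obtain ⟨e2, e3, e4, e5, e6⟩ := rels_of t h2 hne1 A0 (c^2 • H) v0 v1 v2 v3 hv1.symm hv2.symm hv3.symm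
    (by rw [hA]; simp only [smul_mul_assoc, mul_smul_comm, h2']; module)
    (by
      rw [hv2, hv1, hv0, hA]
      simp only [smul_mul_assoc, mul_smul_comm]
      rw [← smul_sub, h1]
      simp only [smul_sub, mul_smul_comm, smul_mul_assoc, mul_sub, sub_mul]
      module) h01
  subst hu0 hu1 hu2 hu3
  simp only [smul_mul_assoc, mul_smul_comm, h01, e2, e3, e4, e5, e6]
  refine ⟨?_, ?_, ?_, ?_, ?_, ?_⟩ <;> module

theorem u_rels : u0*u1 = ((qq⁻¹)^2) • (u1*u0) ∧ 
    u0*u2 = ((qq⁻¹)^2) • (u2*u0) + ((qq⁻¹)^2-1) • (u1*u1) ∧ u1*u2 = ((qq⁻¹)^2) • (u2*u1) ∧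
    u0*u3 = ((qq⁻¹)^2) • (u3*u0) + (((qq⁻¹)^2)^2-1) • (u2*u1) ∧
    u1*u3 = ((qq⁻¹)^2) • (u3*u1) + ((qq⁻¹)^2-1) • (u2*u2) ∧
    u2*u3 = ((qq⁻¹)^2) • (u3*u2) := by
  refine gen_rels qq _ box3 _ _ qq_ne two_ne_zero rfl rfl t_ne1 t_ne2 E1 E2 Aelt v0 v1 v2 v3 u0 u1 u2 u3 ?_ ?_
    rfl rfl rfl rfl rfl rfl rfl rfl rfl
  · have h := RingQuot.mkAlgHom_rel F SerreRel.rel1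
    simp only [map_sub, map_add, map_mul, map_smul, map_pow, map_zero] at h
    exact h
  · have h := RingQuot.mkAlgHom_rel F SerreRel.rel2
    simp only [map_sub, map_add, map_mul, map_smul, map_pow, map_zero] at h
    exact h

theorem us_rels : us0*us1 = ((qq⁻¹)^2) • (us1*us0) ∧ 
    us0*us2 = ((qq⁻¹)^2) • (us2*us0) + ((qq⁻¹)^2-1) • (us1*us1) ∧ us1*us2 = ((qq⁻¹)^2) • (us2*us1) ∧
    us0*us3 = ((qq⁻¹)^2) • (us3*us0) + (((qq⁻¹)^2)^2-1) • (us2*us1) ∧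
    us1*us3 = ((qq⁻¹)^2) • (us3*us1) + ((qq⁻¹)^2-1) • (us2*us2) ∧
    us2*us3 = ((qq⁻¹)^2) • (us3*us2) := by
  obtain ⟨h1, h2, h3, h4, h5, h6⟩ := u_rels
  exact ⟨Subtype.ext h1, Subtype.ext h2, Subtype.ext h3, Subtype.ext h4, Subtype.ext h5, Subtype.ext h6⟩
end
noncomputable section
section part5
variable {K R : Type*} [Field K] [Ring R] [Algebra K R]

theorem Sset_lt {b c : Idx} (h : b ∈ Sset c) : b.1 + b.2.2.2 < c.1 + c.2.2.2 := by
  obtain ⟨⟨s, r, h1, h2, h3, h4⟩, hne⟩ := h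
  by_contra hcon
  apply hne
  obtain ⟨b3, b2, b1, b0⟩ := b
  obtain ⟨c3, c2, c1, c0⟩ := c
  simp only at *
  simp only [Prod.mk.injEq]
  omega

theorem Nnum_tri {a b : Idx} (h : tri a b) : Nnum b = Nnum a := by
  obtain ⟨s, r, h1, h2, h3, h4⟩ := h
  simp only [Nnum, h1, h2, h3, h4]
  ring

theorem tri_trans {a b c : Idx} (h : tri a b) (h' : tri b c) : tri a c := by
  obtain ⟨s, r, h1, h2, h3, h4⟩ := h
  obtain ⟨s', r', h1', h2', h3', h4'⟩ := h'
  refine ⟨s+s', r+r', ?_, ?_, ?_, ?_⟩ <;> push_cast <;> omega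

theorem Sset_trans {a b c : Idx} (h : b ∈ Sset a) (h' : c ∈ Sset b) : c ∈ Sset a := by
  refine ⟨tri_trans h.1 h'.1, ?_⟩
  rintro rfl
  have := Sset_lt h
  have := Sset_lt h'
  omega

theorem tri_refl (a : Idx) : tri a a := ⟨0, 0, by simp, by simp, by simp, by simp⟩

/-- lattice `∑ q ℤ[q] E[b]` over `b ∈ S(a)` -/
def Latq (q : K) (E : Idx → R) (a : Idx) : AddSubgroup R :=
  AddSubgroup.closure {x | ∃ (k : ℕ) (c : Idx), c ∈ Sset a ∧ x = q^(k+1) • E c}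

/-- span -/
def Vsp (K : Type*) {R : Type*} [Field K] [Ring R] [Algebra K R] (E : Idx → R) (a : Idx) : Submodule K R :=
  Submodule.span K (E '' Sset a)

theorem Latq_gen (q : K) (E : Idx → R) {a c : Idx} (h : c ∈ Sset a) (k : ℕ) (hk : 1 ≤ k) :
    q^k • E c ∈ Latq q E a := by
  obtain ⟨k, rfl⟩ := Nat.exists_eq_add_of_le' hk
  exact AddSubgroup.subset_closure ⟨k, c, h, rfl⟩

theorem Latq_le_V (q : K) (E : Idx → R) {a : Idx} {x : R} (h : x ∈ Latq q E a) : x ∈ Vsp K E a := by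
  have : Latq q E a ≤ (Vsp K E a).toAddSubgroup := by
    rw [Latq, AddSubgroup.closure_le]
    rintro _ ⟨k, c, hc, rfl⟩
    exact Submodule.smul_mem _ _ (Submodule.subset_span ⟨c, hc, rfl⟩)
  exact this h

theorem Latq_q (q : K) (E : Idx → R) {a : Idx} {x : R} (h : x ∈ Latq q E a) (k : ℕ) :
    q^k • x ∈ Latq q E a := by
  induction h using AddSubgroup.closure_induction with
  | mem x hx =>
    obtain ⟨j, c, hc, rfl⟩ := hx
    rw [smul_smul, ← pow_add]
    exact Latq_gen q E hc _ (by omega)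
  | zero => rw [smul_zero]; exact zero_mem _
  | add x y _ _ hx hy => rw [smul_add]; exact add_mem hx hy
  | neg x _ hx => rw [smul_neg]; exact neg_mem hx

theorem V_mono (E : Idx → R) {a b : Idx} (h : b ∈ Sset a) : Vsp K E b ≤ Vsp K E a := by
  apply Submodule.span_mono
  rintro _ ⟨c, hc, rfl⟩
  exact ⟨c, Sset_trans h hc, rfl⟩

theorem poly_mem (q : K) (E : Idx → R) (a : Idx) (φ : Idx →₀ Polynomial ℤ)
    (hφ : (↑φ.support : Set Idx) ⊆ Sset a) :
    (φ.sum fun b p => (q * Polynomial.eval₂ (Int.castRingHom K) q p) • E b) ∈ Latq q E a := by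
  refine AddSubgroup.sum_mem _ fun b hb => ?_
  have hb' := hφ hb
  simp only
  generalize φ b = p
  induction p using Polynomial.induction_on' with
  | add p r hp hr => rw [Polynomial.eval₂_add, mul_add, add_smul]; exact add_mem hp hr
  | monomial n c =>
    rw [Polynomial.eval₂_monomial]
    have : (q * ((Int.castRingHom K) c * q^n)) • E b = c • (q^(n+1) • E b) := by
      rw [← Int.cast_smul_eq_zsmul K, smul_smul]; congr 1; simp; ring
    rw [this]
    exact zsmul_mem (Latq_gen q E hb' _ (by omega)) _

theorem Latq_coord (q : K) (E : Idx → R) {a : Idx} {x : R} (h : x ∈ Latq q E a) :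
    ∃ d : Idx →₀ K, Finsupp.linearCombination K E d = x ∧ (∀ b, d b ≠ 0 → b ∈ Sset a) ∧
      ∀ b, ∃ p : Polynomial ℤ, d b = q * Polynomial.eval₂ (Int.castRingHom K) q p := by
  induction h using AddSubgroup.closure_induction with
  | mem x hx =>
    obtain ⟨j, c, hc, rfl⟩ := hx
    refine ⟨Finsupp.single c (q^(j+1)), by simp, ?_, ?_⟩
    · intro b hb
      by_cases hbc : c = b
      · exact hbc ▸ hc
      · simp [Finsupp.single_apply, hbc] at hb
    · intro b
      by_cases hbc : c = b
      · exact ⟨Polynomial.X^j, by simp [Finsupp.single_apply, hbc, Polynomial.eval₂_pow, pow_succ']⟩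
      · exact ⟨0, by simp [Finsupp.single_apply, hbc]⟩
  | zero => exact ⟨0, by simp, by simp, fun b => ⟨0, by simp⟩⟩
  | add x y _ _ hx hy =>
    obtain ⟨d, h1, h2, h3⟩ := hx
    obtain ⟨e, g1, g2, g3⟩ := hy
    refine ⟨d+e, by rw [map_add, h1, g1], ?_, ?_⟩
    · intro b hb
      by_cases hd : d b = 0
      · apply g2; intro he; apply hb; simp [hd, he]
      · exact h2 b hd
    · intro b
      obtain ⟨p, hp⟩ := h3 b
      obtain ⟨r, hr⟩ := g3 b
      exact ⟨p+r, by rw [Finsupp.add_apply, hp, hr, Polynomial.eval₂_add, mul_add]⟩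
  | neg x _ hx =>
    obtain ⟨d, h1, h2, h3⟩ := hx
    refine ⟨-d, by rw [map_neg, h1], ?_, ?_⟩
    · intro b hb
      exact h2 b (by simpa using hb)
    · intro b
      obtain ⟨p, hp⟩ := h3 b
      exact ⟨-p, by rw [Finsupp.neg_apply, hp, Polynomial.eval₂_neg, mul_neg]⟩

theorem sig_E (q : K) (bar : K →+* K) (E B : Idx → R) (σ : R →+ R)
    (hs : ∀ (c : K) x, σ (c • x) = bar c • σ x)
    (hB : ∀ a, B a - E a ∈ Latq q E a) (hσB : ∀ a, σ (B a) = q^(-Nnum a) • B a) (c : Idx) :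
    σ (E c) - q^(-Nnum c) • E c ∈ Vsp K E c := by
  induction hn : c.1 + c.2.2.2 using Nat.strong_induction_on generalizing c with
  | _ n ih =>
    have key : ∀ x ∈ Vsp K E c, σ x ∈ Vsp K E c := by
      intro x hx
      induction hx using Submodule.span_induction with
      | mem x hx =>
        obtain ⟨b, hb, rfl⟩ := hx
        have h1 := ih _ (hn ▸ Sset_lt hb) b rfl
        have h2 := V_mono (K := K) E hb h1
        have h3 : E b ∈ Vsp K E c := Submodule.subset_span ⟨b, hb, rfl⟩
        have := add_mem h2 (Submodule.smul_mem _ (q^(-Nnum b)) h3)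
        rwa [sub_add_cancel] at this
      | zero => rw [map_zero]; exact zero_mem _
      | add x y _ _ hx hy => rw [map_add]; exact add_mem hx hy
      | smul k x _ hx => rw [hs]; exact Submodule.smul_mem _ _ hx
    have h1 := Latq_le_V q E (hB c)
    have h2 := key _ h1
    rw [map_sub, hσB] at h2
    have h3 := sub_mem (Submodule.smul_mem _ (q^(-Nnum c)) h1) h2
    convert h3 using 1
    rw [smul_sub]; abel

theorem uniq (q : K) (hq : q ≠ 0) (bar : K →+* K) (hbar : bar q = q⁻¹)
    (hfix : ∀ p : Polynomial ℤ, q * Polynomial.eval₂ (Int.castRingHom K) q p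
      = q⁻¹ * Polynomial.eval₂ (Int.castRingHom K) q⁻¹ p → p = 0)
    (E B : Idx → R) (hE : LinearIndependent K E) (σ : R →+ R)
    (hs : ∀ (c : K) x, σ (c • x) = bar c • σ x)
    (hB : ∀ a, B a - E a ∈ Latq q E a) (hσB : ∀ a, σ (B a) = q^(-Nnum a) • B a)
    (a : Idx) (x : R) (hx : x - E a ∈ Latq q E a) (hσx : σ x = q^(-Nnum a) • x) : B a = x := by
  have hD : x - B a ∈ Latq q E a := by
    have := sub_mem hx (hB a); rwa [sub_sub_sub_cancel_right] at this
  have hσD : σ (x - B a) = q^(-Nnum a) • (x - B a) := by rw [map_sub, hσx, hσB, smul_sub]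
  obtain ⟨d, h1, h2, h3⟩ := Latq_coord q E hD
  suffices hd : d = 0 by
    rw [hd, map_zero] at h1
    exact (sub_eq_zero.1 h1.symm).symm
  by_contra hd
  obtain ⟨b, hb, hmax⟩ := Finset.exists_max_image d.support (fun c => c.1 + c.2.2.2)
    (Finsupp.support_nonempty_iff.2 hd)
  obtain ⟨g, hg⟩ := LinearMap.exists_leftInverse_of_injective (Finsupp.linearCombination K E)
    (LinearMap.ker_eq_bot.2 hE)
  set ℓ : R →ₗ[K] K := (Finsupp.lapply b) ∘ₗ g with hℓ
  have hgT : ∀ m, g (Finsupp.linearCombination K E m) = m := fun m => by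
    rw [← LinearMap.comp_apply, hg, LinearMap.id_apply]
  have hℓT : ∀ m, ℓ (Finsupp.linearCombination K E m) = m b := fun m => by
    rw [hℓ, LinearMap.comp_apply, hgT]; rfl
  have hℓE : ∀ c, ℓ (E c) = if c = b then 1 else 0 := fun c => by
    have := hℓT (Finsupp.single c 1)
    rw [Finsupp.linearCombination_single, one_smul] at this
    rw [this, Finsupp.single_apply]
  have hℓV : ∀ c, b ∉ Sset c → ∀ y ∈ Vsp K E c, ℓ y = 0 := by
    intro c hc y hy
    induction hy using Submodule.span_induction with
    | mem y hy =>
      obtain ⟨e, he, rfl⟩ := hy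
      rw [hℓE, if_neg]; rintro rfl; exact hc he
    | zero => simp
    | add x y _ _ hx hy => rw [map_add, hx, hy, add_zero]
    | smul k x _ hx => rw [map_smul, hx, smul_zero]
  have hb0 : d b ≠ 0 := Finsupp.mem_support_iff.1 hb
  have hNb : Nnum b = Nnum a := Nnum_tri (h2 b hb0).1
  have e1 : ℓ (σ (x - B a)) = bar (d b) * q^(-Nnum a) := by
    rw [← h1, Finsupp.linearCombination_apply, Finsupp.sum, map_sum, map_sum, Finset.sum_eq_single b]
    · have h := hℓV b (fun h => absurd (Sset_lt h) (lt_irrefl _)) _ (sig_E q bar E B σ hs hB hσB b)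
      rw [map_sub, map_smul, hℓE, if_pos rfl, sub_eq_zero] at h
      rw [hs, map_smul, h, hNb]; simp
    · intro c hc hcb
      have h := hℓV c (fun h => absurd (Sset_lt h) (not_lt.2 (hmax c hc))) _ (sig_E q bar E B σ hs hB hσB c)
      rw [map_sub, map_smul, hℓE, if_neg hcb, smul_zero, sub_zero] at h
      rw [hs, map_smul, h, smul_zero]
    · intro h; exact absurd hb h
  rw [hσD, map_smul, ← h1, hℓT, smul_eq_mul, mul_comm] at e1
  have e2 := mul_right_cancel₀ (zpow_ne_zero _ hq) e1
  obtain ⟨p, hp⟩ := h3 b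
  rw [hp, map_mul, hbar, Polynomial.hom_eval₂, hbar, RingHom.ext_int (bar.comp (Int.castRingHom K)) (Int.castRingHom K)] at e2
  apply hb0
  rw [hp, hfix p e2, Polynomial.eval₂_zero, mul_zero]

/-- triangularity -/
def Tr (q : K) (E : Idx → R) (a : Idx) (x : R) : Prop := x - E a ∈ Latq q E a

theorem Tr_map (q : K) (E : Idx → R) {a a' : Idx} {x : R} (f : R →ₗ[K] R) (hx : Tr q E a x)
    (h1 : Tr q E a' (f (E a))) (h2 : ∀ b ∈ Sset a, q • f (E b) ∈ Latq q E a') : Tr q E a' (f x) := by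
  have key : ∀ y ∈ Latq q E a, f y ∈ Latq q E a' := by
    intro y hy
    induction hy using AddSubgroup.closure_induction with
    | mem x hx =>
      obtain ⟨j, c, hc, rfl⟩ := hx
      rw [map_smul, pow_succ, mul_smul]
      exact Latq_q q E (h2 c hc) _
    | zero => rw [map_zero]; exact zero_mem _
    | add x y _ _ hx hy => rw [map_add]; exact add_mem hx hy
    | neg x _ hx => rw [map_neg]; exact neg_mem hx
  have := add_mem (key _ hx) h1
  rwa [map_sub, sub_add_sub_cancel] at this

theorem Tr_small (q : K) (E : Idx → R) {a a' : Idx} {x : R} (f : R →ₗ[K] R) (hx : Tr q E a x)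
    (h2 : ∀ b, tri a b → f (E b) ∈ Latq q E a') : f x ∈ Latq q E a' := by
  have key : ∀ y ∈ Latq q E a, f y ∈ Latq q E a' := by
    intro y hy
    induction hy using AddSubgroup.closure_induction with
    | mem x hx =>
      obtain ⟨j, c, hc, rfl⟩ := hx
      rw [map_smul]
      exact Latq_q q E (h2 c hc.1) _
    | zero => rw [map_zero]; exact zero_mem _
    | add x y _ _ hx hy => rw [map_add]; exact add_mem hx hy
    | neg x _ hx => rw [map_neg]; exact neg_mem hx
  have := add_mem (key _ hx) (h2 a (tri_refl a))
  rwa [← map_add, sub_add_cancel] at this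
end part5
end
noncomputable section
section part6
variable {K R : Type*} [Field K] [Ring R] [Algebra K R]

theorem qc_r (c : K) (x y : R) (h : x*y = c•(y*x)) (n : ℕ) : x*y^n = c^n•(y^n*x) := by
  induction n with
  | zero => simp
  | succ n ih =>
    rw [pow_succ y, ← mul_assoc, ih, smul_mul_assoc, mul_assoc, h, mul_smul_comm, smul_smul, ← mul_assoc, pow_succ]

theorem qc_l (c : K) (x y : R) (h : x*y = c•(y*x)) (n : ℕ) : x^n*y = c^n•(y*x^n) := by
  induction n with
  | zero => simp
  | succ n ih =>
    rw [pow_succ' x, mul_assoc, ih, mul_smul_comm, ← mul_assoc, h, smul_mul_assoc, smul_smul, ← mul_assoc, pow_succ, mul_assoc]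

/-- generic dual PBW element -/
def gE (q : K) (u3 u2 u1 u0 : R) (a : Idx) : R :=
  q ^ bexp a • (u3 ^ a.1 * u2 ^ a.2.1 * u1 ^ a.2.2.1 * u0 ^ a.2.2.2)

theorem ch2 (k : ℕ) : Nat.choose (k+1) 2 = Nat.choose k 2 + k := by
  rw [Nat.choose_succ_succ' k 1, Nat.choose_one_right, Nat.add_comm]

variable (q : K) (u0 u1 u2 u3 : R)

theorem gE3 (a b c d : ℕ) : q^a • (u3 * gE q u3 u2 u1 u0 (a,b,c,d)) = gE q u3 u2 u1 u0 (a+1,b,c,d) := by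
  simp only [gE, bexp, ch2, mul_smul_comm, smul_smul, pow_succ' u3, mul_assoc]
  congr 1; ring

theorem gE0 (a b c d : ℕ) : q^d • (gE q u3 u2 u1 u0 (a,b,c,d) * u0) = gE q u3 u2 u1 u0 (a,b,c,d+1) := by
  simp only [gE, bexp, ch2, smul_mul_assoc, smul_smul, pow_succ u0, mul_assoc]
  congr 1; ring

theorem gE1 (hq : q ≠ 0) (h : u0*u1 = ((q⁻¹)^2)•(u1*u0)) (a b c d : ℕ) :
    q^(2*d+c) • (gE q u3 u2 u1 u0 (a,b,c,d) * u1) = gE q u3 u2 u1 u0 (a,b,c+1,d) := by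
  simp only [gE, bexp, ch2, smul_mul_assoc, smul_smul, pow_succ u1, mul_assoc]
  rw [qc_l _ _ _ h]
  simp only [mul_smul_comm, smul_smul]
  congr 1
  rw [← pow_mul, inv_pow]; field_simp; ring

theorem gE2 (hq : q ≠ 0) (h : u2*u3 = ((q⁻¹)^2)•(u3*u2)) (a b c d : ℕ) :
    q^(2*a+b) • (u2 * gE q u3 u2 u1 u0 (a,b,c,d)) = gE q u3 u2 u1 u0 (a,b+1,c,d) := by
  simp only [gE, bexp, ch2, mul_smul_comm, smul_smul, pow_succ' u2, ← mul_assoc]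
  rw [qc_r _ _ _ h]
  simp only [smul_mul_assoc, smul_smul, mul_assoc]
  congr 1
  rw [← pow_mul, inv_pow]; field_simp; ring

theorem gEp1 (hq : q ≠ 0) (p1 : R) (hp1 : p1 = u3*u1 - q^2•(u2*u2)) (h12 : u1*u2 = ((q⁻¹)^2)•(u2*u1))
    (h3 : u3*p1 = q^2•(p1*u3)) (a b c d : ℕ) :
    q^(3*a+2*b+c) • (p1 * gE q u3 u2 u1 u0 (a,b,c,d)) =
      gE q u3 u2 u1 u0 (a+1,b,c+1,d) - q^(a+c+1) • gE q u3 u2 u1 u0 (a,b+1+1,c,d) := by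
  have e1 := qc_l _ _ _ h3 a
  have e2 : u3^a * p1 * u2^b = (((q⁻¹)^2)^b) • (u3^(a+1) * u2^b * u1) - q^2 • (u3^a * u2^(b+1+1)) := by
    rw [hp1, mul_sub, sub_mul, mul_smul_comm, smul_mul_assoc, mul_assoc, mul_assoc u3 u1, qc_r _ _ _ h12 b,
      pow_succ u3, pow_succ' u2 (b+1), pow_succ' u2 b]
    simp only [mul_smul_comm, mul_assoc]
  have e3 : (q^2)^a • (p1 * u3^a * u2^b * u1^c * u0^d) =
     (((q⁻¹)^2)^b) • (u3^(a+1) * u2^b * u1^(c+1) * u0^d) - q^2 • (u3^a * u2^(b+1+1) * u1^c * u0^d) := by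
    have := congrArg (fun x => x * u1^c * u0^d) e2
    simp only [e1, smul_mul_assoc, sub_mul] at this
    rw [this, pow_succ' u1]; simp only [mul_assoc]
  simp only [gE, bexp, ch2, mul_smul_comm, ← mul_assoc]
  have e4 := congrArg (fun x => (q^(a+2*b+c) * q^(a.choose 2 + b.choose 2 + c.choose 2 + d.choose 2)) • x) e3
  simp only [smul_sub, smul_smul] at e4
  rw [smul_smul]
  convert e4 using 2
  · ring
  · congr 1; rw [← pow_mul, inv_pow]; field_simp; ring
  · rw [smul_smul]; congr 1; ring

theorem gEp0 (hq : q ≠ 0) (p0 : R) (hp0 : p0 = u2*u0 - q^2•(u1*u1)) (h01 : u0*u1 = ((q⁻¹)^2)•(u1*u0))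
    (h2 : u2*p0 = q^2•(p0*u2)) (h3 : u3*p0 = q^4•(p0*u3)) (a b c d : ℕ) :
    q^(4*a+3*b+2*c+d) • (p0 * gE q u3 u2 u1 u0 (a,b,c,d)) =
      gE q u3 u2 u1 u0 (a,b+1,c,d+1) - q^(b+d+1) • gE q u3 u2 u1 u0 (a,b,c+1+1,d) := by
  have e1 := qc_l _ _ _ h3 a
  have e1' := qc_l _ _ _ h2 b
  have e2 : p0 * u1^c = (((q⁻¹)^2)^c) • (u2 * u1^c * u0) - q^2 • (u1^(c+1+1)) := by
    rw [hp0, sub_mul, smul_mul_assoc, mul_assoc, mul_assoc, qc_r _ _ _ h01 c, pow_succ' u1 (c+1), pow_succ' u1 c]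
    simp only [mul_smul_comm, mul_assoc]
  have e3 : ((q^4)^a * (q^2)^b) • (p0 * u3^a * u2^b * u1^c * u0^d) =
     (((q⁻¹)^2)^c) • (u3^a * u2^(b+1) * u1^c * u0^(d+1)) - q^2 • (u3^a * u2^b * u1^(c+1+1) * u0^d) := by
    have h := congrArg (fun x => u3^a * (u2^b * x) * u0^d) e2
    simp only [← mul_assoc] at h
    rw [mul_assoc (u3^a), e1', mul_smul_comm, ← mul_assoc, e1] at h
    simp only [smul_mul_assoc, mul_smul_comm, smul_smul, mul_sub, sub_mul] at h
    rw [mul_comm, h, pow_succ' u0, pow_succ u2]; simp only [mul_assoc]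
  simp only [gE, bexp, ch2, mul_smul_comm, ← mul_assoc]
  have e4 := congrArg (fun x => (q^(b+2*c+d) * q^(a.choose 2 + b.choose 2 + c.choose 2 + d.choose 2)) • x) e3
  simp only [smul_sub, smul_smul] at e4
  rw [smul_smul]
  convert e4 using 2
  · ring
  · congr 1; rw [← pow_mul, inv_pow]; field_simp; ring
  · rw [smul_smul]; congr 1; ring

theorem gEw (hq : q ≠ 0) (p1 : R) (hp1 : p1 = u3*u1 - q^2•(u2*u2)) (h12 : u1*u2 = ((q⁻¹)^2)•(u2*u1))
    (h23 : u2*u3 = ((q⁻¹)^2)•(u3*u2))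
    (h3 : u3*p1 = q^2•(p1*u3)) (a b c d : ℕ) :
    q^(5*a+3*b+c+2) • (p1 * u2 * gE q u3 u2 u1 u0 (a,b,c,d)) =
      gE q u3 u2 u1 u0 (a+1,b+1,c+1,d) - q^(a+c+1) • gE q u3 u2 u1 u0 (a,b+1+1+1,c,d) := by
  rw [← gEp1 q u0 u1 u2 u3 hq p1 hp1 h12 h3 a (b+1) c d, ← gE2 q u0 u1 u2 u3 hq h23 a b c d,
    mul_smul_comm, smul_smul, mul_assoc]
  congr 1; ring
end part6
end
noncomputable section
section part7
variable {K R : Type*} [Field K] [Ring R] [Algebra K R]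
variable (q : K) (u0 u1 u2 u3 : R)

theorem Latq_gen1 (E : Idx → R) {a c : Idx} (h : c ∈ Sset a) : q • E c ∈ Latq q E a := by
  have := Latq_gen q E h 1 le_rfl
  rwa [pow_one] at this

theorem trA (m : ℕ) (x : R) (hx : Tr q (gE q u3 u2 u1 u0) (m,0,0,m) x) :
    Tr q (gE q u3 u2 u1 u0) (m+1,0,0,m) (q^m • (u3*x)) := by
  refine Tr_map q _ (q^m • LinearMap.mulLeft K u3) hx ?_ ?_
  · simp only [LinearMap.smul_apply, LinearMap.mulLeft_apply, Tr]
    rw [gE3, sub_self]; exact zero_mem _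
  · rintro ⟨a, b, c, d⟩ hb
    obtain ⟨⟨s, r, h1, h2, h3, h4⟩, hne⟩ := hb
    simp only [ne_eq, Prod.mk.injEq] at h1 h2 h3 h4 hne
    simp only [LinearMap.smul_apply, LinearMap.mulLeft_apply]
    obtain rfl : m = s + a := by omega
    rw [pow_add, mul_smul, gE3, smul_smul, ← pow_succ']
    refine Latq_gen _ _ ⟨⟨s, r, ?_, ?_, ?_, ?_⟩, ?_⟩ _ (by omega)
    all_goals simp only [ne_eq, Prod.mk.injEq]; push_cast; omega

theorem trC (m : ℕ) (x : R) (hx : Tr q (gE q u3 u2 u1 u0) (m+1,0,0,m) x) :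
    Tr q (gE q u3 u2 u1 u0) (m+1,0,0,m+1) (q^m • (x*u0)) := by
  refine Tr_map q _ (q^m • LinearMap.mulRight K u0) hx ?_ ?_
  · simp only [LinearMap.smul_apply, LinearMap.mulRight_apply, Tr]
    rw [gE0, sub_self]; exact zero_mem _
  · rintro ⟨a, b, c, d⟩ hb
    obtain ⟨⟨s, r, h1, h2, h3, h4⟩, hne⟩ := hb
    simp only [ne_eq, Prod.mk.injEq] at h1 h2 h3 h4 hne
    simp only [LinearMap.smul_apply, LinearMap.mulRight_apply]
    obtain rfl : m = r + d := by omega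
    rw [pow_add, mul_smul, gE0, smul_smul, ← pow_succ']
    refine Latq_gen _ _ ⟨⟨s, r, ?_, ?_, ?_, ?_⟩, ?_⟩ _ (by omega)
    all_goals simp only [ne_eq, Prod.mk.injEq]; push_cast at * <;> omega

theorem trD (hq : q ≠ 0) (h : u0*u1 = ((q⁻¹)^2)•(u1*u0)) (m : ℕ) (x : R)
    (hx : Tr q (gE q u3 u2 u1 u0) (m,1,0,m) x) :
    q^(2*m+2) • (x*u1) ∈ Latq q (gE q u3 u2 u1 u0) (m+1,0,0,m+1) := by
  refine Tr_small q _ (q^(2*m+2) • LinearMap.mulRight K u1) hx ?_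
  rintro ⟨a, b, c, d⟩ hb
  obtain ⟨s, r, h1, h2, h3, h4⟩ := hb
  simp only at h1 h2 h3 h4
  simp only [LinearMap.smul_apply, LinearMap.mulRight_apply]
  rw [show 2*m+2 = (s+2) + (2*d+c) by omega, pow_add, mul_smul, gE1 q u0 u1 u2 u3 hq h]
  refine Latq_gen _ _ ⟨⟨s+1, r+1, ?_, ?_, ?_, ?_⟩, ?_⟩ _ (by omega)
  all_goals simp only [ne_eq, Prod.mk.injEq]; push_cast at * <;> omega

theorem trB (hq : q ≠ 0) (p1 : R) (hp1 : p1 = u3*u1 - q^2•(u2*u2)) (h12 : u1*u2 = ((q⁻¹)^2)•(u2*u1))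
    (h23 : u2*u3 = ((q⁻¹)^2)•(u3*u2))
    (hp3 : u3*p1 = q^2•(p1*u3)) (m : ℕ) (x : R)
    (hx : Tr q (gE q u3 u2 u1 u0) (m,0,0,m) x) :
    q^(5*m+3) • (p1*u2*x) ∈ Latq q (gE q u3 u2 u1 u0) (m+1+1,0,0,m+1) := by
  refine Tr_small q _ (q^(5*m+3) • LinearMap.mulLeft K (p1*u2)) hx ?_
  rintro ⟨a, b, c, d⟩ hb
  obtain ⟨s, r, h1, h2, h3, h4⟩ := hb
  simp only at h1 h2 h3 h4
  simp only [LinearMap.smul_apply, LinearMap.mulLeft_apply]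
  rw [show 5*m+3 = (r+1) + (5*a+3*b+c+2) by omega, pow_add, mul_smul,
    gEw q u0 u1 u2 u3 hq p1 hp1 h12 h23 hp3, smul_sub, smul_smul, ← pow_add]
  refine sub_mem ?_ ?_
  · refine Latq_gen _ _ ⟨⟨s+1, r+1, ?_, ?_, ?_, ?_⟩, ?_⟩ _ (by omega)
    all_goals simp only [ne_eq, Prod.mk.injEq]; push_cast at * <;> omega
  · refine Latq_gen _ _ ⟨⟨s+2, r+1, ?_, ?_, ?_, ?_⟩, ?_⟩ _ (by omega)
    all_goals simp only [ne_eq, Prod.mk.injEq]; push_cast at * <;> omega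

theorem trZ (hq : q ≠ 0) (p0 : R) (hp0 : p0 = u2*u0 - q^2•(u1*u1)) (h01 : u0*u1 = ((q⁻¹)^2)•(u1*u0))
    (hp2 : u2*p0 = q^2•(p0*u2)) (hp3 : u3*p0 = q^4•(p0*u3)) (m : ℕ) (x : R)
    (hx : Tr q (gE q u3 u2 u1 u0) (m+1,0,0,m) x) :
    Tr q (gE q u3 u2 u1 u0) (m+1,1,0,m+1) (q^(5*m+4) • (p0*x)) := by
  refine Tr_map q _ (q^(5*m+4) • LinearMap.mulLeft K p0) hx ?_ ?_
  · simp only [LinearMap.smul_apply, LinearMap.mulLeft_apply, Tr]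
    rw [show 5*m+4 = 4*(m+1)+3*0+2*0+m by omega, gEp0 q u0 u1 u2 u3 hq p0 hp0 h01 hp2 hp3, sub_sub_cancel_left]
    refine neg_mem (Latq_gen _ _ ⟨⟨0, 1, ?_, ?_, ?_, ?_⟩, ?_⟩ _ (by omega))
    all_goals simp only [ne_eq, Prod.mk.injEq]; push_cast at * <;> omega
  · rintro ⟨a, b, c, d⟩ hb
    obtain ⟨⟨s, r, h1, h2, h3, h4⟩, hne⟩ := hb
    simp only [ne_eq, Prod.mk.injEq] at h1 h2 h3 h4 hne
    simp only [LinearMap.smul_apply, LinearMap.mulLeft_apply]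
    rw [show 5*m+4 = 4*a+3*b+2*c+d by push_cast at *; omega, gEp0 q u0 u1 u2 u3 hq p0 hp0 h01 hp2 hp3,
      smul_sub, smul_smul, ← pow_succ']
    refine sub_mem ?_ ?_
    · refine Latq_gen1 _ _ ⟨⟨s, r, ?_, ?_, ?_, ?_⟩, ?_⟩
      all_goals simp only [ne_eq, Prod.mk.injEq]; push_cast at * <;> omega
    · refine Latq_gen _ _ ⟨⟨s, r+1, ?_, ?_, ?_, ?_⟩, ?_⟩ _ (by omega)
      all_goals simp only [ne_eq, Prod.mk.injEq]; push_cast at * <;> omega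

theorem trY (hq : q ≠ 0) (p1 : R) (hp1 : p1 = u3*u1 - q^2•(u2*u2)) (h12 : u1*u2 = ((q⁻¹)^2)•(u2*u1))
    (hp3 : u3*p1 = q^2•(p1*u3)) (m : ℕ) (x : R)
    (hx : Tr q (gE q u3 u2 u1 u0) (m,1,0,m) x) :
    Tr q (gE q u3 u2 u1 u0) (m+1,1,1,m) (q^(3*m+2) • (p1*x)) := by
  refine Tr_map q _ (q^(3*m+2) • LinearMap.mulLeft K p1) hx ?_ ?_
  · simp only [LinearMap.smul_apply, LinearMap.mulLeft_apply, Tr]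
    rw [show 3*m+2 = 3*m+2*1+0 by omega, gEp1 q u0 u1 u2 u3 hq p1 hp1 h12 hp3, sub_sub_cancel_left]
    refine neg_mem (Latq_gen _ _ ⟨⟨1, 0, ?_, ?_, ?_, ?_⟩, ?_⟩ _ (by omega))
    all_goals simp only [ne_eq, Prod.mk.injEq]; push_cast at * <;> omega
  · rintro ⟨a, b, c, d⟩ hb
    obtain ⟨⟨s, r, h1, h2, h3, h4⟩, hne⟩ := hb
    simp only [ne_eq, Prod.mk.injEq] at h1 h2 h3 h4 hne
    simp only [LinearMap.smul_apply, LinearMap.mulLeft_apply]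
    rw [show 3*m+2 = 3*a+2*b+c by push_cast at *; omega, gEp1 q u0 u1 u2 u3 hq p1 hp1 h12 hp3,
      smul_sub, smul_smul, ← pow_succ']
    refine sub_mem ?_ ?_
    · refine Latq_gen1 _ _ ⟨⟨s, r, ?_, ?_, ?_, ?_⟩, ?_⟩
      all_goals simp only [ne_eq, Prod.mk.injEq]; push_cast at * <;> omega
    · refine Latq_gen _ _ ⟨⟨s+1, r, ?_, ?_, ?_, ?_⟩, ?_⟩ _ (by omega)
      all_goals simp only [ne_eq, Prod.mk.injEq]; push_cast at * <;> omega

end part7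
end
noncomputable section
section part8
variable {K R : Type*} [Field K] [Ring R] [Algebra K R]

/-- `B[m,1,0,m]` -/
def Zq (q : K) (u2 p0 : R) (X : ℕ → R) : ℕ → R
  | 0 => u2
  | m+1 => q^(5*m+4) • (p0 * X m)

/-- `B[m+1,1,1,m]` -/
def Yq (q : K) (u2 p1 p0 : R) (X : ℕ → R) (m : ℕ) : R := q^(3*m+2) • (p1 * Zq q u2 p0 X m)

theorem Yq_succ (q : K) (u2 p1 p0 : R) (X : ℕ → R) (m : ℕ) :
    Yq q u2 p1 p0 X (m+1) = q^(8*m+9) • (p1*p0*X m) := by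
  rw [Yq, Zq, mul_smul_comm, smul_smul, mul_assoc]; congr 1; ring

theorem tri_all (q : K) (hq : q ≠ 0) (u0 u1 u2 u3 p1 p0 z : R)
    (r01 : u0*u1 = (q⁻¹)^2 • (u1*u0)) (r12 : u1*u2 = (q⁻¹)^2 • (u2*u1)) (r23 : u2*u3 = (q⁻¹)^2 • (u3*u2))
    (hp1 : p1 = u3*u1 - q^2 • (u2*u2)) (hp0 : p0 = u2*u0 - q^2 • (u1*u1))
    (hz : z = u3*u0 - q^2 • (u2*u1))
    (a3 : u3*p1 = q^2 • (p1*u3)) (b2 : u2*p0 = q^2 • (p0*u2)) (b3 : u3*p0 = q^4 • (p0*u3))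
    (X S : ℕ → R) (hX0 : X 0 = u3) (hS0 : S 0 = 1) (hS1 : S 1 = z)
    (hXS : ∀ m, X (m+1) = q^(m+1) • (u3 * S (m+1)) - q^(5*m+3) • (p1*u2 * S m))
    (hSX : ∀ m, S (m+2) = q^(m+1) • (X (m+1) * u0) - q^(7*m+8) • (p0 * X m * u1)) (m : ℕ) :
    Tr q (gE q u3 u2 u1 u0) (m,0,0,m) (S m) ∧ Tr q (gE q u3 u2 u1 u0) (m+1,0,0,m) (X m) ∧
    Tr q (gE q u3 u2 u1 u0) (m,1,0,m) (Zq q u2 p0 X m) := by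
  have hSu : ∀ m, S (m+1) = q^m • (X m * u0) - q^(2*m+2) • (Zq q u2 p0 X m * u1) := by
    intro m
    cases m with
    | zero => simp [hS1, hX0, hz, Zq]
    | succ m =>
      rw [hSX, Zq, smul_mul_assoc, smul_smul]
      congr 2; ring
  induction m with
  | zero =>
    refine ⟨?_, ?_, ?_⟩
    · simp [Tr, gE, bexp, hS0]
    · simp [Tr, gE, bexp, hX0]
    · simp [Tr, gE, bexp, Zq]
  | succ m ih =>
    obtain ⟨i1, i2, i3⟩ := ih
    have j1 : Tr q (gE q u3 u2 u1 u0) (m+1,0,0,m+1) (S (m+1)) := by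
      have := sub_mem (trC q u0 u1 u2 u3 m _ i2) (trD q u0 u1 u2 u3 hq r01 m _ i3)
      rw [sub_right_comm, ← hSu] at this; exact this
    refine ⟨j1, ?_, ?_⟩
    · have := sub_mem (trA q u0 u1 u2 u3 (m+1) _ j1) (trB q u0 u1 u2 u3 hq p1 hp1 r12 r23 a3 m _ i1)
      rw [sub_right_comm, ← hXS] at this; exact this
    · exact trZ q u0 u1 u2 u3 hq p0 hp0 r01 b2 b3 m _ i2

theorem sig_all (q : K) (hq : q ≠ 0) (bar : K →+* K) (hbar : bar q = q⁻¹) (σ : R →+ R)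
    (hm : ∀ x y, σ (x*y) = σ y * σ x) (hs : ∀ (c : K) x, σ (c • x) = bar c • σ x)
    (u2 u3 p1 p0 z : R) (s2 : σ u2 = q^4 • u2) (s3 : σ u3 = q^6 • u3) (sz : σ z = q^4 • z)
    (sp1 : σ p1 = q^6 • p1) (sp0 : σ p0 = q^2 • p0) (a2 : p1*u2 = u2*p1) (hpp : p1*p0 = q^4 • (p0*p1))
    (X : ℕ → R) (hX0 : X 0 = u3) (hX1 : X 1 = q • (u3*z) - q^3 • (p1*u2)) (hX1' : X 1 = q^3 • (z*u3) - q • (p1*u2))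
    (hX : ∀ m, X (m+2) = q^(4*m+5) • (X (m+1) * z) - q^(8*m+10) • (p1*p0 * X m))
    (hX' : ∀ m, X (m+2) = q^(4*m+7) • (z * X (m+1)) - q^(8*m+8) • (p1*p0 * X m))
    (hXP : ∀ m, X m * (p1*p0) = q^6 • (p1*p0 * X m)) :
    (∀ m : ℕ, σ (X m) = q^(6+4*(m:ℤ)-4*(m:ℤ)^2) • X m) ∧
    (∀ m : ℕ, σ (Yq q u2 p1 p0 X m) = q^(6-4*((m:ℤ)+1)*m) • Yq q u2 p1 p0 X m) := by
  have hb : ∀ k : ℕ, bar (q^k) = q^(-(k:ℤ)) := by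
    intro k; rw [map_pow, hbar, inv_pow, zpow_neg, zpow_natCast]
  have hb1 : bar q = q^(-1:ℤ) := by rw [hbar, zpow_neg_one]
  have sw : σ (p1*u2) = q^10 • (p1*u2) := by
    rw [hm, s2, sp1, a2, smul_mul_smul_comm]; congr 1; ring
  have sP : σ (p1*p0) = q^4 • (p1*p0) := by
    rw [hm, sp1, sp0, smul_mul_smul_comm, hpp, smul_smul]; congr 1; ring
  have hXs : ∀ m : ℕ, σ (X m) = q^(6+4*(m:ℤ)-4*(m:ℤ)^2) • X m := by
    intro m
    induction m using Nat.twoStepInduction with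
    | zero => rw [hX0, s3, ← zpow_natCast]; simp
    | one =>
      rw [hX1, map_sub, hs, hs, hm, sz, s3, sw, ← hX1, hX1', hb, hb1, smul_mul_smul_comm, smul_sub, smul_smul, smul_smul, smul_smul, smul_smul]
      have h6 : q^(6+4*((1:ℕ):ℤ)-4*((1:ℕ):ℤ)^2) = q^6 := by rw [← zpow_natCast q 6]; norm_num
      rw [h6]
      congr 2
      · rw [zpow_neg_one]; field_simp
      · rw [zpow_neg, zpow_natCast]; field_simp
    | more m e1 e2 =>
      rw [hX, map_sub, hs, hs, hm, hm (p1*p0), sz, sP, e1, e2, ← hX, hX', hb, hb, smul_mul_smul_comm,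
        smul_mul_smul_comm, hXP, smul_sub]
      simp only [smul_smul]
      congr 2
      · simp only [← zpow_natCast q, ← zpow_add₀ hq]; congr 1 <;> (push_cast; ring)
      · simp only [← zpow_natCast q, ← zpow_add₀ hq]; congr 1 <;> (push_cast; ring)
  refine ⟨hXs, ?_⟩
  intro m
  cases m with
  | zero =>
    rw [Yq, Zq, hs, hb, sw]
    simp only [smul_smul]
    congr 1
    simp only [← zpow_natCast q, ← zpow_add₀ hq]; congr 1
  | succ m =>
    rw [Yq_succ, hs, hb, hm, sP, hXs, smul_mul_smul_comm, hXP]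
    simp only [smul_smul]
    congr 1
    simp only [← zpow_natCast q, ← zpow_add₀ hq]; congr 1 <;> (push_cast; ring)

theorem main_gen (q : K) (hq : q ≠ 0) (u0 u1 u2 u3 : R)
    (r01 : u0*u1 = (q⁻¹)^2 • (u1*u0))
    (r02 : u0*u2 = (q⁻¹)^2 • (u2*u0) + ((q⁻¹)^2-1) • (u1*u1))
    (r12 : u1*u2 = (q⁻¹)^2 • (u2*u1))
    (r03 : u0*u3 = (q⁻¹)^2 • (u3*u0) + (((q⁻¹)^2)^2-1) • (u2*u1))
    (r13 : u1*u3 = (q⁻¹)^2 • (u3*u1) + ((q⁻¹)^2-1) • (u2*u2))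
    (r23 : u2*u3 = (q⁻¹)^2 • (u3*u2))
    (bar : K →+* K) (hbar : bar q = q⁻¹)
    (hfix : ∀ p : Polynomial ℤ, q * Polynomial.eval₂ (Int.castRingHom K) q p
      = q⁻¹ * Polynomial.eval₂ (Int.castRingHom K) q⁻¹ p → p = 0)
    (hM : LinearIndependent K (fun a : Idx => u3 ^ a.1 * u2 ^ a.2.1 * u1 ^ a.2.2.1 * u0 ^ a.2.2.2))
    (σ : R → R) (hadd : ∀ x y, σ (x+y) = σ x + σ y)
    (hm : ∀ x y, σ (x*y) = σ y * σ x) (hs : ∀ (c : K) x, σ (c • x) = bar c • σ x)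
    (s0 : σ u0 = u0) (s1 : σ u1 = q^2 • u1) (s2 : σ u2 = q^4 • u2) (s3 : σ u3 = q^6 • u3)
    (B : Idx → R)
    (hB : ∀ a, ∃ φ : Idx →₀ Polynomial ℤ, (↑φ.support : Set Idx) ⊆ Sset a ∧
      B a - gE q u3 u2 u1 u0 a =
        φ.sum fun b p => (q * Polynomial.eval₂ (Int.castRingHom K) q p) • gE q u3 u2 u1 u0 b)
    (hσB : ∀ a, σ (B a) = q^(-Nnum a) • B a) (m : ℕ) :
    B (m+1,0,0,m) * B (1,0,0,1) = q^(-1-4*(m:ℤ)) • B (m+2,0,0,m+1) + q^(-4*(m:ℤ)) • B (m+1,1,1,m) ∧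
    B (1,0,0,1) * B (m+1,0,0,m) = q^(-3-4*(m:ℤ)) • B (m+2,0,0,m+1) + q^(-4-4*(m:ℤ)) • B (m+1,1,1,m) := by
  obtain ⟨p1, hp1⟩ : ∃ x, x = u3*u1 - q^2 • (u2*u2) := ⟨_, rfl⟩
  obtain ⟨p0, hp0⟩ : ∃ x, x = u2*u0 - q^2 • (u1*u1) := ⟨_, rfl⟩
  obtain ⟨z, hz⟩ : ∃ x, x = u3*u0 - q^2 • (u2*u1) := ⟨_, rfl⟩
  obtain ⟨a, b, ⟨I1, I2, I3⟩, t1, t0, tz⟩ :=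
    base_ids q hq u0 u1 u2 u3 p1 p0 z r01 r02 r12 r03 r13 r23 hp1 hp0 hz
  obtain ⟨c1, c2, c3⟩ := comm_ids q hq u0 u1 u2 u3 p1 p0 z hp1 hp0 hz a b
  obtain ⟨a1, a2, a3, a0⟩ := a
  obtain ⟨b0, b1, b2, b3⟩ := b
  have hq2 : q^2 ≠ 0 := pow_ne_zero _ hq
  have hP : (p1*p0)*z = z*(p1*p0) := by
    have : q^2 • (p1*p0*z) = q^2 • (z*(p1*p0)) := by
      rw [mul_assoc, ← mul_smul_comm, ← c2, ← mul_assoc, c1, smul_mul_assoc, mul_assoc]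
    exact smul_right_injective R hq2 this
  have hP3 : u3*(p1*p0) = q^6 • ((p1*p0)*u3) := by
    rw [← mul_assoc, a3, smul_mul_assoc, mul_assoc, b3, mul_smul_comm, smul_smul, mul_assoc]
    congr 1; ring
  have hPw : (p1*u2)*(p1*p0) = q^6 • ((p1*p0)*(p1*u2)) := by
    have e : p1*p0*(p1*u2)*1 = p1*p0*p1*u2 := by simp only [mul_one, mul_assoc]
    rw [mul_one] at e
    have e1 : p1*u2*(p1*p0) = q^2 • (p1*p1*(p0*u2)) := by
      rw [← mul_assoc, mul_assoc p1 u2 p1, ← a2, ← mul_assoc, mul_assoc _ u2 p0, b2, mul_smul_comm]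
    have e2 : p1*p1*(p0*u2) = q^4 • (p1*p0*p1*u2) := by
      have e3 : p1*(p1*p0) = q^4 • (p1*(p0*p1)) := by rw [← mul_smul_comm, ← c3]
      rw [← mul_assoc, mul_assoc p1 p1 p0, e3, smul_mul_assoc, ← mul_assoc p1 p0 p1]
    rw [e1, e2, e, smul_smul]; congr 1; ring
  obtain ⟨X, hX⟩ : ∃ X, X = Xq q u3 (q • (u3*z) - q^3 • (p1*u2)) z (p1*p0) := ⟨_, rfl⟩
  have hX0 : X 0 = u3 := by rw [hX, Xq]
  have hX1 : X 1 = q • (u3*z) - q^3 • (p1*u2) := by rw [hX, Xq]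
  have hX2 : ∀ m, X (m+2) = q^(4*m+5) • (X (m+1) * z) - q^(8*m+10) • (p1*p0 * X m) := by
    intro m; rw [hX, Xq]
  obtain ⟨L1, L⟩ := X_left q hq u3 u2 (p1*u2) z (p1*p0) p1 p0 hP rfl rfl c1 I1 I2 X hX
  have hXP : ∀ m, X m * (p1*p0) = q^6 • (p1*p0 * X m) := by
    intro m; rw [hX]
    apply Xq_P _ _ _ _ _ hP hP3
    rw [sub_mul, mul_sub, smul_sub, smul_mul_assoc, smul_mul_assoc, hPw, mul_assoc, ← hP, ← mul_assoc, hP3]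
    simp only [smul_mul_assoc, mul_smul_comm, mul_assoc]
    module
  have T := tri_all q hq u0 u1 u2 u3 p1 p0 z r01 r12 r23 hp1 hp0 hz a3 b2 b3 X (Sq q z (p1*p0)) hX0
    (by rw [Sq]) (by rw [Sq]) (by rw [hX]; exact X_of_S q u3 (p1*u2) z (p1*p0) hP3 hPw)
    (S_of_X q hq u3 u2 u1 u0 (p1*u2) z (p1*p0) p1 p0 hP rfl rfl hp0 hz c2 c3 I3 X L1 hX0 L)
  have hb : ∀ k : ℕ, bar (q^k) = (q⁻¹)^k := by intro k; rw [map_pow, hbar]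
  obtain ⟨τ, hτ⟩ : ∃ τ : R →+ R, ∀ x, τ x = σ x := ⟨AddMonoidHom.mk' σ hadd, fun x => rfl⟩
  have hmτ : ∀ x y, τ (x*y) = τ y * τ x := fun x y => by rw [hτ, hτ, hτ, hm]
  have hsτ : ∀ (c : K) x, τ (c • x) = bar c • τ x := fun c x => by rw [hτ, hτ, hs]
  have sg : ∀ x y x' y' : R, ∀ k l k' l' : ℕ, τ x = q^k • x → τ y = q^l • y → τ x' = q^k' • x' → τ y' = q^l' • y' →
      τ (x*y - q^2 • (x'*y')) = q^(k+l) • (y*x) - ((q⁻¹)^2 * q^(k'+l')) • (y'*x') := by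
    intro x y x' y' k l k' l' h1 h2 h3 h4
    rw [map_sub, hsτ, hmτ, hmτ, h1, h2, h3, h4, hb, smul_mul_smul_comm, smul_mul_smul_comm, smul_smul]
    congr 2 <;> ring
  have s0' : τ u0 = q^0 • u0 := by rw [hτ, s0]; simp
  have s1' : τ u1 = q^2 • u1 := by rw [hτ, s1]
  have s2' : τ u2 = q^4 • u2 := by rw [hτ, s2]
  have s3' : τ u3 = q^6 • u3 := by rw [hτ, s3]
  have sz : τ z = q^4 • z := by
    rw [← tz, hz, sg u3 u0 u2 u1 6 0 4 2 s3' s0' s2' s1']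
    congr 2; field_simp
  have sp1 : τ p1 = q^6 • p1 := by
    rw [← t1, hp1, sg u3 u1 u2 u2 6 2 4 4 s3' s1' s2' s2']
    congr 2; field_simp
  have sp0 : τ p0 = q^2 • p0 := by
    rw [← t0, hp0, sg u2 u0 u1 u1 4 0 2 2 s2' s0' s1' s1']
    congr 2; field_simp
  obtain ⟨σX, σY⟩ := sig_all q hq bar hbar τ hmτ hsτ u2 u3 p1 p0 z s2' s3' sz sp1 sp0 a2 c3 X hX0 hX1 L1 hX2 L hXP
  have hE : LinearIndependent K (gE q u3 u2 u1 u0) :=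
    hM.units_smul (fun a => Units.mk0 (q ^ bexp a) (pow_ne_zero _ hq))
  have U := uniq q hq bar hbar hfix (gE q u3 u2 u1 u0) B hE τ hsτ
    (fun a => by obtain ⟨φ, h1, h2⟩ := hB a; rw [h2]; exact poly_mem q _ a φ h1)
    (fun a => by rw [hτ, hσB])
  have BX : ∀ m, B (m+1,0,0,m) = X m := fun m => U _ _ (T m).2.1 (by
    rw [σX]; congr 2; simp only [Nnum]; push_cast; ring)
  have BY : ∀ m, B (m+1,1,1,m) = Yq q u2 p1 p0 X m := fun m => U _ _
    (trY q u0 u1 u2 u3 hq p1 hp1 r12 a3 m _ (T m).2.2) (by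
    rw [σY]; congr 2; simp only [Nnum]; push_cast; ring)
  have Bz : B (1,0,0,1) = z := U _ _ (by have := (T 1).1; rwa [Sq] at this) (by
    rw [sz, ← zpow_natCast]; congr 2)
  rw [BX, BX (m+1), BY, Bz]
  cases m with
  | zero =>
    rw [Yq, Zq]
    constructor
    · rw [hX0, hX1, smul_sub, smul_smul, smul_smul, smul_smul]
      have e1 : q^(-1-4*((0:ℕ):ℤ)) = q⁻¹ := by simp
      have e2 : q^(-4*((0:ℕ):ℤ)) = 1 := by simp
      rw [e1, e2]
      match_scalars <;> field_simp <;> try ring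
    · rw [hX0, L1, smul_sub, smul_smul, smul_smul, smul_smul]
      have e1 : q^(-3-4*((0:ℕ):ℤ)) = (q^3)⁻¹ := by rw [← zpow_natCast, ← zpow_neg]; simp
      have e2 : q^(-4-4*((0:ℕ):ℤ)) = (q^4)⁻¹ := by rw [← zpow_natCast, ← zpow_neg]; simp
      rw [e1, e2]
      match_scalars <;> field_simp <;> try ring
  | succ m =>
    rw [Yq_succ]
    constructor
    · rw [hX2, smul_sub, smul_smul, smul_smul, smul_smul]
      have e1 : q^(-1-4*((m+1:ℕ):ℤ)) = (q^(4*m+5))⁻¹ := by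
        rw [← zpow_natCast, ← zpow_neg]; congr 1 <;> (push_cast; ring)
      have e2 : q^(-4*((m+1:ℕ):ℤ)) = (q^(4*m+4))⁻¹ := by
        rw [← zpow_natCast, ← zpow_neg]; congr 1 <;> (push_cast; ring)
      rw [e1, e2]
      match_scalars <;> field_simp <;> try ring
    · rw [L, smul_sub, smul_smul, smul_smul, smul_smul]
      have e1 : q^(-3-4*((m+1:ℕ):ℤ)) = (q^(4*m+7))⁻¹ := by
        rw [← zpow_natCast, ← zpow_neg]; congr 1 <;> (push_cast; ring)
      have e2 : q^(-4-4*((m+1:ℕ):ℤ)) = (q^(4*m+8))⁻¹ := by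
        rw [← zpow_natCast, ← zpow_neg]; congr 1 <;> (push_cast; ring)
      rw [e1, e2]
      match_scalars <;> field_simp <;> try ring
end part8
end
/-- For every integer `n ≥ 1` the dual canonical basis elements satisfy the product
expansions `B[n,0,0,n−1]·B[1,0,0,1] = q^{3−4n} B[n+1,0,0,n] + q^{4−4n} B[n,1,1,n−1]`
and `B[1,0,0,1]·B[n,0,0,n−1] = q^{1−4n} B[n+1,0,0,n] + q^{−4n} B[n,1,1,n−1]`. -/
theorem stmt13 (bar : F →+* F) (σ : Sgen → Sgen) (B : Idx → Sgen)
    (hPBW : LinearIndependent F mon) (hσ : SigmaHyp bar σ) (hB : DCB bar σ B) (n : ℕ) (hn : 1 ≤ n) :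
    Bz B ((n : ℤ), 0, 0, (n : ℤ) - 1) * Bz B (1, 0, 0, 1)
        = qq ^ (3 - 4 * (n : ℤ)) • Bz B ((n : ℤ) + 1, 0, 0, (n : ℤ))
          + qq ^ (4 - 4 * (n : ℤ)) • Bz B ((n : ℤ), 1, 1, (n : ℤ) - 1) ∧
    Bz B (1, 0, 0, 1) * Bz B ((n : ℤ), 0, 0, (n : ℤ) - 1)
        = qq ^ (1 - 4 * (n : ℤ)) • Bz B ((n : ℤ) + 1, 0, 0, (n : ℤ))
          + qq ^ (-4 * (n : ℤ)) • Bz B ((n : ℤ), 1, 1, (n : ℤ) - 1) := by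
  obtain ⟨m, rfl⟩ := Nat.exists_eq_add_of_le' hn
  obtain ⟨hbar, -, hadd, hm, hs, s0, s1, s2, s3⟩ := hσ
  obtain ⟨r01, r02, r12, r03, r13, r23⟩ := us_rels
  have hM : LinearIndependent F (fun a : Idx => us3 ^ a.1 * us2 ^ a.2.1 * us1 ^ a.2.2.1 * us0 ^ a.2.2.2) := hPBW
  have hB1 : ∀ a, ∃ φ : Idx →₀ Polynomial ℤ, (↑φ.support : Set Idx) ⊆ Sset a ∧
      B a - gE qq us3 us2 us1 us0 a =
        φ.sum fun b p => (qq * Polynomial.eval₂ (Int.castRingHom F) qq p) • gE qq us3 us2 us1 us0 b := fun a => (hB a).1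
  have hB2 := fun a => (hB a).2
  have key := main_gen (K := F) (R := Sgen) qq qq_ne us0 us1 us2 us3 r01 r02 r12 r03 r13 r23 bar hbar bar_fix
  have key2 := key hM σ hadd hm hs s0 s1 s2 s3
  have key3 := key2 B hB1 hB2 m
  have b1 : Bz B (((m+1:ℕ) : ℤ), 0, 0, ((m+1:ℕ) : ℤ) - 1) = B (m+1,0,0,m) := by
    rw [Bz, if_pos ⟨by simp only; omega, le_rfl, le_rfl, by simp only; omega⟩]
    congr 2; simp
  have b2 : Bz B (1, 0, 0, 1) = B (1,0,0,1) := by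
    rw [Bz, if_pos ⟨by simp only; omega, le_rfl, le_rfl, by simp only; omega⟩]; rfl
  have b3 : Bz B (((m+1:ℕ) : ℤ)+1, 0, 0, ((m+1:ℕ) : ℤ)) = B (m+2,0,0,m+1) := by
    rw [Bz, if_pos ⟨by simp only; omega, le_rfl, le_rfl, by simp only; omega⟩]
    congr 2
  have b4 : Bz B (((m+1:ℕ) : ℤ), 1, 1, ((m+1:ℕ) : ℤ) - 1) = B (m+1,1,1,m) := by
    rw [Bz, if_pos ⟨by simp only; omega, by simp only; omega, by simp only; omega, by simp only; omega⟩]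
    congr 2; simp
  rw [b1, b2, b3, b4]
  have e1 : 3 - 4 * ((m+1:ℕ) : ℤ) = -1-4*(m:ℤ) := by push_cast; ring
  have e2 : 4 - 4 * ((m+1:ℕ) : ℤ) = -4*(m:ℤ) := by push_cast; ring
  have e3 : 1 - 4 * ((m+1:ℕ) : ℤ) = -3-4*(m:ℤ) := by push_cast; ring
  have e4 : -4 * ((m+1:ℕ) : ℤ) = -4-4*(m:ℤ) := by push_cast; ring
  rw [e1, e2, e3, e4]
  exact key3
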